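/- arXiv:2209.07847 — 4 statements merged into one kernel-verified Lean document; each statement's English description precedes it below -/
import Mathlib

section
/- Let I ⊂ S = K[x_1,…,x_n] be a squarefree monomial ideal. Then (a) the k-th squarefree power I^{[k]} is the zero ideal if and only if k > ν(I); and (b) for every k with 1 ≤ k ≤ ν(I), one has depth(S/I^{[k]}) ≥ d_k − 1, i.e. g_I(k) ≥ 0. -/
open MvPolynomial

section Preamble

variable (K : Type*) [Field K] {σ : Type*} [Fintype σ] [DecidableEq σ]

/-- A (monic) monomial of the polynomial ring. -/
def IsMonomial (f : MvPolynomial σ K) : Prop :=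
  ∃ d : σ →₀ ℕ, f = monomial d 1

/-- An ideal generated by monomials. -/
def IsMonomialIdeal (I : Ideal (MvPolynomial σ K)) : Prop :=
  ∃ A : Set (MvPolynomial σ K), (∀ u ∈ A, IsMonomial K u) ∧ I = Ideal.span A

/-- The unique minimal set of monomial generators `G(I)` of a monomial ideal:
the monomials of `I` that are minimal with respect to divisibility. -/
def minGens (I : Ideal (MvPolynomial σ K)) : Set (MvPolynomial σ K) :=
  {u | IsMonomial K u ∧ u ∈ I ∧ ∀ v, IsMonomial K v → v ∈ I → v ∣ u → v = u}

/-- A squarefree monomial ideal. -/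
def IsSqfreeMonomialIdeal (I : Ideal (MvPolynomial σ K)) : Prop :=
  IsMonomialIdeal K I ∧ ∀ u ∈ minGens K I, Squarefree u

/-- The `k`-th squarefree power `I^{[k]}`: the ideal generated by the squarefree
products of `k` minimal monomial generators of `I`. -/
noncomputable def sqPow (I : Ideal (MvPolynomial σ K)) (k : ℕ) : Ideal (MvPolynomial σ K) :=
  Ideal.span {u | Squarefree u ∧ ∃ l : List (MvPolynomial σ K),
    l.length = k ∧ (∀ f ∈ l, f ∈ minGens K I) ∧ u = l.prod}

/-- `ν(I)`: the maximum length of a regular sequence of monomials in `I`. -/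
noncomputable def monNu (I : Ideal (MvPolynomial σ K)) : ℕ :=
  sSup {m | ∃ l : List (MvPolynomial σ K), l.length = m ∧
    (∀ f ∈ l, IsMonomial K f ∧ f ∈ I) ∧
    RingTheory.Sequence.IsRegular (MvPolynomial σ K) l}

/-- The minimal degree `d` of a minimal monomial generator of `I`
(so `d_k = minDeg (I^{[k]})`). -/
noncomputable def minDeg (I : Ideal (MvPolynomial σ K)) : ℕ :=
  sInf (totalDegree '' minGens K I)

/-- `depth(S/I)`: the maximum length of an `S/I`-regular sequence of elements of
the graded maximal ideal `(x_1, …, x_n)`. -/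
noncomputable def qdepth (I : Ideal (MvPolynomial σ K)) : ℕ :=
  sSup {m | ∃ l : List (MvPolynomial σ K), l.length = m ∧
    (∀ f ∈ l, f ∈ Ideal.span (Set.range (X : σ → MvPolynomial σ K))) ∧
    RingTheory.Sequence.IsRegular (MvPolynomial σ K ⧸ I) l}

/-- `I` has linear quotients with respect to the ordering `L` of its minimal
monomial generators: each successive colon ideal is generated by variables. -/
def HasLinearQuotientsOrder (I : Ideal (MvPolynomial σ K))
    (L : List (MvPolynomial σ K)) : Prop :=
  L.Nodup ∧ (∀ u, u ∈ L ↔ u ∈ minGens K I) ∧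
  ∀ i : Fin L.length, 0 < (i : ℕ) →
    ∃ A : Set σ,
      Submodule.colon (Ideal.span {u | u ∈ L.take (i : ℕ)}) (Ideal.span {L.get i})
        = Ideal.span (X '' A)

/-- A monomial ideal with linear quotients. -/
def HasLinearQuotients (I : Ideal (MvPolynomial σ K)) : Prop :=
  ∃ L, HasLinearQuotientsOrder K I L

/-- A polymatroidal ideal: a monomial ideal generated in a single degree whose
minimal generators satisfy the exchange property. -/
def IsPolymatroidal (I : Ideal (MvPolynomial σ K)) : Prop :=
  IsMonomialIdeal K I ∧
  (∃ d, ∀ u ∈ minGens K I, totalDegree u = d) ∧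
  ∀ u ∈ minGens K I, ∀ v ∈ minGens K I, ∀ k : σ,
    degreeOf k v < degreeOf k u →
    ∃ l : σ, degreeOf l u < degreeOf l v ∧
      ∃ w, u = X k * w ∧ X l * w ∈ minGens K I

/-- A matroidal ideal: a polymatroidal ideal all of whose minimal generators are
squarefree. -/
def IsMatroidal (I : Ideal (MvPolynomial σ K)) : Prop :=
  IsPolymatroidal K I ∧ ∀ u ∈ minGens K I, Squarefree u

/-- The squarefree part of a monomial ideal: the ideal generated by its squarefree
minimal generators. -/
noncomputable def sqfPart (I : Ideal (MvPolynomial σ K)) : Ideal (MvPolynomial σ K) :=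
  Ideal.span {u | u ∈ minGens K I ∧ Squarefree u}

/-- The squarefree Veronese ideal `𝔪^{[d]}`, generated by all squarefree
monomials of degree `d`. -/
noncomputable def veronese (d : ℕ) : Ideal (MvPolynomial σ K) :=
  Ideal.span {u | ∃ F : Finset σ, F.card = d ∧ u = ∏ i ∈ F, X i}

/-- A chordal graph: no induced cycle of length greater than 3. -/
def IsChordal {V : Type*} (G : SimpleGraph V) : Prop :=
  ∀ m : ℕ, 4 ≤ m → ¬ ∃ f : ZMod m → V, Function.Injective f ∧
    ∀ i j : ZMod m, G.Adj (f i) (f j) ↔ (i = j + 1 ∨ j = i + 1)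

/-- A matching of `G`: a finite set of pairwise vertex-disjoint edges of `G`. -/
def IsMatching (G : SimpleGraph σ) (M : Finset (Sym2 σ)) : Prop :=
  (↑M ⊆ G.edgeSet) ∧ (M : Set (Sym2 σ)).Pairwise fun e f => ∀ v, v ∈ e → v ∉ f

/-- A `k`-matching of `G`. -/
def IsKMatching (G : SimpleGraph σ) (M : Finset (Sym2 σ)) (k : ℕ) : Prop :=
  IsMatching G M ∧ M.card = k

/-- The vertex set `V(M)` of a matching. -/
def mVerts (M : Finset (Sym2 σ)) : Finset σ :=
  Finset.univ.filter fun v => ∃ e ∈ M, v ∈ e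

/-- The squarefree monomial `∏_{v ∈ V(M)} x_v` attached to a matching. -/
noncomputable def matchMon (M : Finset (Sym2 σ)) : MvPolynomial σ K :=
  ∏ v ∈ mVerts M, X v

/-- The edge ideal `I(G)` of a finite simple graph `G`. -/
noncomputable def edgeIdeal (G : SimpleGraph σ) : Ideal (MvPolynomial σ K) :=
  Ideal.span {u | ∃ i j, G.Adj i j ∧ u = X i * X j}

/-- The `k`-th squarefree power `I(G)^{[k]}` of the edge ideal, generated by the
monomials `∏_{v ∈ V(M)} x_v` of the `k`-matchings `M` of `G`. -/
noncomputable def matchPow (G : SimpleGraph σ) (k : ℕ) : Ideal (MvPolynomial σ K) :=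
  Ideal.span {u | ∃ M : Finset (Sym2 σ), IsKMatching G M k ∧ u = matchMon K M}

/-- The matching number `ν(G)`. -/
noncomputable def matchNum (G : SimpleGraph σ) : ℕ :=
  sSup {k | ∃ M : Finset (Sym2 σ), IsKMatching G M k}

end Preamble

namespace SqP

def WR {R : Type*} [CommRing R] : Ideal R → List R → Prop
  | _, [] => True
  | J, a :: l => (∀ p, a * p ∈ J → p ∈ J) ∧ WR (J ⊔ Ideal.span {a}) l

section gen
variable {R : Type*} [CommRing R]

lemma mem_sup_span {J : Ideal R} {a p : R} :
    p ∈ J ⊔ Ideal.span {a} ↔ ∃ q, p - a * q ∈ J := by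
  constructor
  · intro h
    obtain ⟨y, hy, z, hz, rfl⟩ := Submodule.mem_sup.1 h
    obtain ⟨c, rfl⟩ := Ideal.mem_span_singleton'.1 hz
    exact ⟨c, by simpa [mul_comm] using hy⟩
  · rintro ⟨q, hq⟩
    have : p = (p - a * q) + a * q := by ring
    rw [this]
    exact Ideal.add_mem _ (Ideal.mem_sup_left hq)
      (Ideal.mem_sup_right (Ideal.mul_mem_right _ _ (Ideal.mem_span_singleton_self a)))

lemma smulReg_iff (J : Ideal R) (a : R) :
    IsSMulRegular (R ⧸ J) a ↔ ∀ p, a * p ∈ J → p ∈ J := by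
  rw [isSMulRegular_iff_right_eq_zero_of_smul]
  constructor
  · intro h p hp
    have := h (Ideal.Quotient.mk J p) (by
      rw [← Ideal.Quotient.eq_zero_iff_mem] at hp
      rw [← hp]; rfl)
    exact Ideal.Quotient.eq_zero_iff_mem.1 this
  · intro h x hx
    obtain ⟨p, rfl⟩ := Ideal.Quotient.mk_surjective x
    refine Ideal.Quotient.eq_zero_iff_mem.2 (h p ?_)
    rw [← Ideal.Quotient.eq_zero_iff_mem, ← hx]; rfl

noncomputable def qEquiv (J : Ideal R) (a : R) :
    QuotSMulTop a (R ⧸ J) ≃ₗ[R] (R ⧸ (J ⊔ Ideal.span {a})) :=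
  Submodule.quotEquivOfEq _ _ (by
    rw [← Submodule.ideal_span_singleton_smul, ← (Submodule.range_mkQ J), ← Submodule.map_top,
      ← Submodule.map_smul'']
    simp) ≪≫ₗ Submodule.quotientQuotientEquivQuotientSup J (Ideal.span {a})

lemma wr_iff (l : List R) : ∀ J : Ideal R,
    RingTheory.Sequence.IsWeaklyRegular (R ⧸ J) l ↔ WR J l := by
  induction l with
  | nil => intro J; simp [WR]
  | cons a l ih =>
    intro J
    rw [RingTheory.Sequence.isWeaklyRegular_cons_iff, WR, smulReg_iff,
      (qEquiv J a).isWeaklyRegular_congr, ih]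

lemma wr_iff_bot (l : List R) :
    RingTheory.Sequence.IsWeaklyRegular R l ↔ WR (⊥ : Ideal R) l := by
  rw [← wr_iff]
  exact (Submodule.quotEquivOfEqBot (⊥ : Ideal R) rfl).symm.isWeaklyRegular_congr l

lemma top_ne_iff (J : Ideal R) (l : List R) :
    (⊤ : Submodule R (R ⧸ J)) ≠ Ideal.ofList l • ⊤ ↔ J ⊔ Ideal.ofList l ≠ ⊤ := by
  have h1 : (Ideal.ofList l • ⊤ : Submodule R (R ⧸ J)) =
      Submodule.map (Submodule.mkQ J) (Ideal.ofList l) := by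
    rw [← (Submodule.range_mkQ J), ← Submodule.map_top, ← Submodule.map_smul'']
    simp
  have h2 := Submodule.comap_map_mkQ J (Ideal.ofList l)
  rw [h1, not_iff_not]
  constructor
  · intro h
    rw [← h] at h2
    rw [← h2]; simp
  · intro h
    rw [h] at h2
    have := congrArg (Submodule.map (Submodule.mkQ J)) h2
    rw [Submodule.map_comap_eq_of_surjective (Submodule.mkQ_surjective J)] at this
    rw [this, Submodule.map_top, Submodule.range_mkQ]

lemma wr_len (l : List R) : ∀ J : Ideal R, WR J l → J ⊔ Ideal.ofList l ≠ ⊤ →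
    (l.length : WithBot ℕ∞) ≤ ringKrullDim (R ⧸ J) := by
  induction l with
  | nil =>
    intro J _ h
    have : J ≠ ⊤ := by simpa using h
    have := Ideal.Quotient.nontrivial_iff.2 this
    simpa using ringKrullDim_nonneg_of_nontrivial
  | cons a l ih =>
    intro J h hne
    have h2 := ih _ h.2 (by rwa [Ideal.ofList_cons, ← sup_assoc] at hne)
    have h3 : (Ideal.Quotient.mk J a) ∈ nonZeroDivisors (R ⧸ J) := by
      rw [mem_nonZeroDivisors_iff_right]
      intro x hx
      obtain ⟨p, rfl⟩ := Ideal.Quotient.mk_surjective x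
      refine Ideal.Quotient.eq_zero_iff_mem.2 (h.1 p ?_)
      rw [← Ideal.Quotient.eq_zero_iff_mem, ← hx, mul_comm, map_mul]
    have h4 := ringKrullDim_quotient_succ_le_of_nonZeroDivisor h3
    have h5 : ringKrullDim ((R ⧸ J) ⧸ Ideal.span {Ideal.Quotient.mk J a}) =
        ringKrullDim (R ⧸ (J ⊔ Ideal.span {a})) := by
      have e := DoubleQuot.quotQuotEquivQuotSup J (Ideal.span {a})
      rw [Ideal.map_span, Set.image_singleton] at e
      exact ringKrullDim_eq_of_ringEquiv e
    rw [h5] at h4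
    refine le_trans ?_ h4
    push_cast [List.length_cons]
    gcongr

lemma wr_ses (x : R) (l : List R) : ∀ J J1 : Ideal R, (∀ q, q ∈ J1 ↔ x * q ∈ J) → WR J1 l →
    WR (J ⊔ Ideal.span {x}) l → WR J l := by
  induction l with
  | nil => intros; trivial
  | cons a l ih =>
    intro J J1 hJ h1 h2
    have key : ∀ p, a * p ∈ J ⊔ Ideal.span {x} → ∃ q, p - x * q ∈ J :=
      fun p hp => mem_sup_span.1 (h2.1 p hp)
    refine ⟨fun p hp => ?_, ih _ (J1 ⊔ Ideal.span {a}) (fun q => ?_) h1.2 ?_⟩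
    · obtain ⟨q, hq⟩ := key p (Ideal.mem_sup_left hp)
      have : a * q ∈ J1 := by
        rw [hJ]
        have := J.sub_mem hp (J.mul_mem_left a hq)
        convert this using 1; ring
      have := (hJ _).1 (h1.1 q this)
      have := J.add_mem hq this
      simpa using this
    · rw [mem_sup_span, mem_sup_span]
      constructor
      · rintro ⟨p, hp⟩
        refine ⟨x * p, ?_⟩
        have := (hJ _).1 hp
        convert this using 1; ring
      · rintro ⟨p, hp⟩
        obtain ⟨p', hp'⟩ := key p (by
          rw [mem_sup_span]
          refine ⟨q, ?_⟩
          rw [← neg_mem_iff]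
          convert hp using 1; ring)
        refine ⟨p', (hJ _).2 ?_⟩
        have := J.add_mem hp (J.mul_mem_left a hp')
        convert this using 1; ring
    · have := h2.2
      rwa [sup_right_comm] at this

lemma sup_span_congr {J : Ideal R} {a b : R} (h : a - b ∈ J) :
    J ⊔ Ideal.span {a} = J ⊔ Ideal.span {b} := by
  have h' : ∀ {a b : R}, a - b ∈ J → J ⊔ Ideal.span {a} ≤ J ⊔ Ideal.span {b} := by
    intro a b h
    refine sup_le le_sup_left ?_
    rw [Ideal.span_singleton_le_iff_mem, mem_sup_span]
    exact ⟨1, by simpa using h⟩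
  exact le_antisymm (h' h) (h' (by rw [← neg_mem_iff]; simpa using h))

lemma mul_congr_mem {J : Ideal R} {a b p : R} (h : a - b ∈ J) : a * p ∈ J ↔ b * p ∈ J := by
  have := J.mul_mem_right p h
  rw [sub_mul] at this
  exact ⟨fun h' => by simpa using J.sub_mem h' this, fun h' => by simpa using J.add_mem this h'⟩

/-- changing a sequence modulo the ideal and previous elements -/
lemma wr_congr_cons {J : Ideal R} {a b : R} {l : List R} (h : a - b ∈ J) :
    WR J (a :: l) ↔ WR J (b :: l) := by
  simp only [WR, sup_span_congr h, mul_congr_mem h]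

lemma wr_map_equiv {R' : Type*} [CommRing R'] (e : R ≃+* R') (l : List R) : ∀ J : Ideal R',
    WR (J.comap (e : R →+* R')) l ↔ WR J (l.map e) := by
  induction l with
  | nil => intro J; simp [WR]
  | cons a l ih =>
    intro J
    simp only [WR, List.map_cons]
    rw [← ih]
    have : (J ⊔ Ideal.span {e a}).comap (e : R →+* R') =
        J.comap (e : R →+* R') ⊔ Ideal.span {a} := by
      ext p
      simp only [Ideal.mem_comap, mem_sup_span]
      constructor
      · rintro ⟨q, hq⟩
        exact ⟨e.symm q, by simpa using hq⟩
      · rintro ⟨q, hq⟩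
        exact ⟨e q, by simpa using hq⟩
    rw [this]
    refine and_congr_left fun _ => ?_
    constructor
    · intro h p hp
      have := h (e.symm p) (by simpa using hp)
      rw [Ideal.mem_comap] at this
      simpa only [RingEquiv.coe_toRingHom, RingEquiv.apply_symm_apply] using this
    · intro h p hp
      exact h (e p) (by simpa using hp)

open Polynomial in
lemma mem_mapC {J : Ideal R} {p : R[X]} :
    p ∈ J.map Polynomial.C ↔ p.map (Ideal.Quotient.mk J) = 0 := by
  rw [Ideal.mem_map_C_iff, Polynomial.ext_iff]
  simp [Ideal.Quotient.eq_zero_iff_mem]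

open Polynomial in
lemma mem_sup_monic {g : R[X]} (hg : g.Monic) (J : Ideal R) (p : R[X]) :
    p ∈ J.map Polynomial.C ⊔ Ideal.span {g} ↔ p %ₘ g ∈ J.map Polynomial.C := by
  rw [mem_sup_span]
  constructor
  · rintro ⟨q, hq⟩
    rw [mem_mapC] at hq ⊢
    rw [Polynomial.map_sub, sub_eq_zero, Polynomial.map_mul] at hq
    rw [map_modByMonic _ hg, modByMonic_eq_zero_iff_dvd (hg.map _), hq]
    exact dvd_mul_right _ _
  · intro h
    refine ⟨p /ₘ g, ?_⟩
    rwa [modByMonic_eq_sub_mul_div] at h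

open Polynomial in
lemma wr_monic {g : R[X]} (hg : g.Monic) (l : List R) : ∀ J : Ideal R, WR J l →
    WR (J.map Polynomial.C ⊔ Ideal.span {g}) (l.map Polynomial.C) := by
  induction l with
  | nil => intros; trivial
  | cons a l ih =>
    intro J h
    refine ⟨fun p hp => ?_, ?_⟩
    · rw [mem_sup_monic hg] at hp ⊢
      rw [← Polynomial.smul_eq_C_mul, smul_modByMonic, Ideal.mem_map_C_iff] at hp
      rw [Ideal.mem_map_C_iff]
      intro i
      exact h.1 _ (by simpa using hp i)
    · have := ih _ h.2
      rw [Ideal.map_sup, Ideal.map_span, Set.image_singleton, sup_right_comm] at this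
      exact this

open Polynomial in
lemma monic_reg {g : R[X]} (hg : g.Monic) (J : Ideal R) (p : R[X]) (h : g * p ∈ J.map Polynomial.C) :
    p ∈ J.map Polynomial.C := by
  rw [mem_mapC] at h ⊢
  rw [Polynomial.map_mul] at h
  exact ((hg.map _).mul_right_eq_zero_iff).1 h

end gen

noncomputable def hh (K : Type*) [Field K] : (n : ℕ) → ℕ → MvPolynomial (Fin n) K
  | _, 0 => 1
  | 0, _ + 1 => 0
  | n + 1, i + 1 => rename Fin.succ (hh K n (i + 1)) + X 0 * hh K (n + 1) i

/-- `h_{s+1}, ..., h_{s+r}` -/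
noncomputable def hl (K : Type*) [Field K] (n : ℕ) : ℕ → ℕ → List (MvPolynomial (Fin n) K)
  | _, 0 => []
  | s, r + 1 => hh K n (s + 1) :: hl K n (s + 1) r

lemma hl_length (K : Type*) [Field K] (n r : ℕ) : ∀ s, (hl K n s r).length = r := by
  induction r with
  | zero => intro s; rfl
  | succ r ih => intro s; simp [hl, ih]

section hsec
variable {K : Type*} [Field K]

lemma hh_const (n : ℕ) (i : ℕ) : constantCoeff (hh K n (i + 1)) = 0 := by
  induction n generalizing i with
  | zero => simp [hh]
  | succ n ih => rw [hh]; simp [constantCoeff_rename, ih]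

lemma hl_const (n r : ℕ) : ∀ s, ∀ f ∈ hl K n s r, constantCoeff f = 0 := by
  induction r with
  | zero => intro s f hf; simp [hl] at hf
  | succ r ih =>
    intro s f hf
    rw [hl, List.mem_cons] at hf
    rcases hf with rfl | hf
    · exact hh_const _ _
    · exact ih _ _ hf

lemma fs_rename (n : ℕ) (p : MvPolynomial (Fin n) K) :
    finSuccEquiv K n (rename Fin.succ p) = Polynomial.C p := by
  induction p using MvPolynomial.induction_on with
  | C a => rw [rename_C, ← algebraMap_eq, AlgEquiv.commutes]; rfl
  | add p q hp hq => simp only [map_add, hp, hq]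
  | mul_X p i hp => simp only [map_mul, hp, rename_X, finSuccEquiv_X_succ]

lemma fs_hh (n i : ℕ) : finSuccEquiv K n (hh K (n + 1) (i + 1)) =
    Polynomial.C (hh K n (i + 1)) + Polynomial.X * finSuccEquiv K n (hh K (n + 1) i) := by
  rw [hh, map_add, map_mul, finSuccEquiv_X_zero, fs_rename]

lemma fs_monic (n i : ℕ) : (finSuccEquiv K n (hh K (n + 1) i)).Monic ∧
    (finSuccEquiv K n (hh K (n + 1) i)).natDegree = i := by
  induction i with
  | zero => simp [hh]
  | succ i ih =>
    rw [fs_hh]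
    have hm : (Polynomial.X * finSuccEquiv K n (hh K (n + 1) i)).Monic :=
      Polynomial.monic_X.mul ih.1
    have hd : (Polynomial.X * finSuccEquiv K n (hh K (n + 1) i)).natDegree = i + 1 := by
      rw [Polynomial.natDegree_X_mul ih.1.ne_zero, ih.2]
    constructor
    · rw [add_comm]
      refine hm.add_of_left ?_
      rw [Polynomial.degree_eq_natDegree hm.ne_zero, hd]
      refine lt_of_le_of_lt Polynomial.degree_C_le ?_
      exact_mod_cast Nat.succ_pos i
    · rw [Polynomial.natDegree_C_add, hd]

/-- modulo `h_s(n+1)` -/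
lemma wr_hl_shift (n r : ℕ) : ∀ s, ∀ J : Ideal (Polynomial (MvPolynomial (Fin n) K)),
    finSuccEquiv K n (hh K (n + 1) s) ∈ J → WR J ((hl K n s r).map Polynomial.C) →
    WR J ((hl K (n + 1) s r).map (finSuccEquiv K n)) := by
  induction r with
  | zero => intros; trivial
  | succ r ih =>
    intro s J hJ h
    have hd : finSuccEquiv K n (hh K (n + 1) (s + 1)) - Polynomial.C (hh K n (s + 1)) ∈ J := by
      rw [fs_hh, add_sub_cancel_left]
      exact J.mul_mem_left _ hJ
    simp only [hl, List.map_cons] at h ⊢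
    rw [wr_congr_cons hd]
    refine ⟨h.1, ih _ _ ?_ h.2⟩
    rw [mem_sup_span]
    exact ⟨1, by simpa using hd⟩

/-- modulo `x` -/
lemma wr_hl_X (n r : ℕ) : ∀ s, ∀ J : Ideal (Polynomial (MvPolynomial (Fin n) K)),
    Polynomial.X ∈ J → WR J ((hl K n s r).map Polynomial.C) →
    WR J ((hl K (n + 1) s r).map (finSuccEquiv K n)) := by
  induction r with
  | zero => intros; trivial
  | succ r ih =>
    intro s J hJ h
    have hd : finSuccEquiv K n (hh K (n + 1) (s + 1)) - Polynomial.C (hh K n (s + 1)) ∈ J := by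
      rw [fs_hh, add_sub_cancel_left]
      exact J.mul_mem_right _ hJ
    simp only [hl, List.map_cons] at h ⊢
    rw [wr_congr_cons hd]
    exact ⟨h.1, ih _ _ (Ideal.mem_sup_left hJ) h.2⟩

/-- nonface ideal -/
def NF {n : ℕ} (D : Set (Finset (Fin n))) (hD : IsLowerSet D) : Ideal (MvPolynomial (Fin n) K) where
  carrier := {p | ∀ d, coeff d p ≠ 0 → d.support ∉ D}
  zero_mem' := by simp
  add_mem' := by
    intro a b ha hb d hd
    by_cases h : coeff d a = 0
    · exact hb d (by simpa [h] using hd)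
    · exact ha d h
  smul_mem' := by
    classical
    intro c p hp d hd hmem
    rw [smul_eq_mul, coeff_mul] at hd
    obtain ⟨⟨a, b⟩, hab, hne⟩ := Finset.exists_ne_zero_of_sum_ne_zero hd
    rw [Finset.HasAntidiagonal.mem_antidiagonal] at hab
    refine hp b (right_ne_zero_of_mul hne) (hD ?_ hmem)
    simp only at hab
    rw [← hab]
    exact Finsupp.support_mono (by simp)

lemma mem_NF {n : ℕ} {D : Set (Finset (Fin n))} {hD : IsLowerSet D} {p : MvPolynomial (Fin n) K} :
    p ∈ NF D hD ↔ ∀ d, coeff d p ≠ 0 → d.support ∉ D := Iff.rfl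

def dele {n : ℕ} (D : Set (Finset (Fin (n + 1)))) : Set (Finset (Fin n)) :=
  {F | F.map (Fin.succEmb n) ∈ D}

def lnk {n : ℕ} (D : Set (Finset (Fin (n + 1)))) : Set (Finset (Fin n)) :=
  {F | insert 0 (F.map (Fin.succEmb n)) ∈ D}

lemma dele_low {n : ℕ} {D : Set (Finset (Fin (n + 1)))} (hD : IsLowerSet D) :
    IsLowerSet (dele D) := by
  intro a b hab ha
  exact hD (Finset.map_subset_map.2 hab) ha

lemma lnk_low {n : ℕ} {D : Set (Finset (Fin (n + 1)))} (hD : IsLowerSet D) :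
    IsLowerSet (lnk D) := by
  intro a b hab ha
  exact hD (Finset.insert_subset_insert _ (Finset.map_subset_map.2 hab)) ha

lemma mem_NF_fs {n : ℕ} {D : Set (Finset (Fin (n + 1)))} {hD : IsLowerSet D}
    (q : Polynomial (MvPolynomial (Fin n) K)) :
    (finSuccEquiv K n).symm q ∈ NF D hD ↔
      q.coeff 0 ∈ NF (K := K) (dele D) (dele_low hD) ∧
      ∀ i, q.coeff (i + 1) ∈ NF (K := K) (lnk D) (lnk_low hD) := by
  obtain ⟨p, rfl⟩ := (finSuccEquiv K n).surjective q
  rw [AlgEquiv.symm_apply_apply]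
  simp only [mem_NF, finSuccEquiv_coeff_coeff]
  have s0 : ∀ d : Fin n →₀ ℕ, (Finsupp.cons 0 d).support = d.support.map (Fin.succEmb n) := by
    intro d
    ext i
    refine Fin.cases ?_ (fun j => ?_) i
    · simp 
    · simp
  have s1 : ∀ (d : Fin n →₀ ℕ) (k : ℕ), (Finsupp.cons (k + 1) d).support =
      insert 0 (d.support.map (Fin.succEmb n)) := by
    intro d k
    ext i
    refine Fin.cases ?_ (fun j => ?_) i
    · simp 
    · simp
  constructor
  · intro h
    constructor
    · intro d hd
      have := h _ hd
      rwa [s0] at this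
    · intro i d hd
      have := h _ hd
      rwa [s1] at this
  · rintro ⟨h0, h1⟩ d hd
    rw [← Finsupp.cons_tail d] at hd ⊢
    cases hk : d 0 with
    | zero => rw [hk] at hd; rw [s0]; exact h0 _ hd
    | succ k => rw [hk] at hd; rw [s1]; exact h1 _ _ hd

theorem wr_main (n : ℕ) : ∀ (s r : ℕ) (D : Set (Finset (Fin n))) (hD : IsLowerSet D), r ≤ n →
    (∀ F : Finset (Fin n), F.card ≤ r → F ∈ D) → WR (NF (K := K) D hD) (hl K n s r) := by
  induction n with
  | zero =>
    intro s r D hD hr _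
    obtain rfl : r = 0 := by omega
    trivial
  | succ n ih =>
    intro s r D hD hr hF
    rcases r with _ | r
    · trivial
    set e := finSuccEquiv K n with he
    let J : Ideal (Polynomial (MvPolynomial (Fin n) K)) :=
      (NF (K := K) D hD).comap (e.symm : _ →+* MvPolynomial (Fin (n + 1)) K)
    have hJ : ∀ q, q ∈ J ↔ q.coeff 0 ∈ NF (K := K) (dele D) (dele_low hD) ∧
      ∀ i, q.coeff (i + 1) ∈ NF (K := K) (lnk D) (lnk_low hD) := fun q => mem_NF_fs (hD := hD) q
    have hJe : NF (K := K) D hD = J.comap (e.toRingEquiv : _ →+* Polynomial _) := by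
      ext p
      simp [J, Ideal.mem_comap]
    rw [hJe, wr_map_equiv]
    have hle : NF (K := K) (dele D) (dele_low hD) ≤ NF (lnk D) (lnk_low hD) := by
      intro p hp d hd h
      exact hp d hd (hD (Finset.subset_insert _ _) h)
    -- colon part
    have hcol : WR ((NF (K := K) (lnk D) (lnk_low hD)).map Polynomial.C)
        ((hl K (n + 1) s (r + 1)).map e) := by
      have hm := (fs_monic (K := K) n (s + 1)).1
      refine ⟨fun p hp => monic_reg hm _ p hp, ?_⟩
      refine wr_hl_shift _ _ _ _ (Ideal.mem_sup_right (Ideal.mem_span_singleton_self _)) ?_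
      refine wr_monic hm _ _ (ih _ _ _ _ (by omega) fun F hFc => hF _ ?_)
      refine (Finset.card_insert_le _ _).trans ?_
      simpa using hFc
    by_cases hrn : r + 1 ≤ n
    · refine wr_ses Polynomial.X _ _ _ (fun q => ?_) hcol ?_
      · rw [hJ, Ideal.mem_map_C_iff]
        simp
      · have hs : J ⊔ Ideal.span {Polynomial.X} =
            (NF (K := K) (dele D) (dele_low hD)).map Polynomial.C ⊔ Ideal.span {Polynomial.X} := by
          apply le_antisymm
          · refine sup_le ?_ le_sup_right
            intro q hq
            rw [hJ] at hq
            rw [← Polynomial.divX_mul_X_add q]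
            refine Ideal.add_mem _ (Ideal.mem_sup_right (Ideal.mul_mem_left _ _
              (Ideal.mem_span_singleton_self _))) (Ideal.mem_sup_left (Ideal.mem_map_of_mem _ hq.1))
          · refine sup_le (le_trans ?_ le_sup_left) le_sup_right
            intro q hq
            rw [Ideal.mem_map_C_iff] at hq
            exact (hJ q).2 ⟨hq 0, fun i => hle (hq _)⟩
        have h1 := wr_monic (Polynomial.monic_X) _ _ (ih s (r + 1) _ (dele_low hD) hrn
          fun F hFc => hF _ (by simpa using hFc))
        rw [hs]
        exact wr_hl_X _ _ _ _ (Ideal.mem_sup_right (Ideal.mem_span_singleton_self _)) h1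
    · have hr' : r = n := by omega
      have hall : ∀ F, F ∈ D := fun F => hF F (by
        have := F.card_le_univ; simp at this; omega)
      have : J = (NF (K := K) (lnk D) (lnk_low hD)).map Polynomial.C := by
        ext q
        rw [hJ, Ideal.mem_map_C_iff]
        constructor
        · rintro ⟨h0, h1⟩ i
          cases i with
          | zero => exact hle h0
          | succ i => exact h1 i
        · intro h
          refine ⟨?_, fun i => h _⟩
          intro d hd _
          exact h 0 d hd (hall _)
      rw [this]
      exact hcol

end hsec
end SqP
namespace SqP
section fin
variable {K : Type*} [Field K] {n : ℕ}

/-- the monomial with exponent `d` -/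
noncomputable abbrev mon (K : Type*) [Field K] {n : ℕ} (d : Fin n →₀ ℕ) : MvPolynomial (Fin n) K :=
  monomial d 1

lemma exists_list (l : List (MvPolynomial (Fin n) K)) (h : ∀ f ∈ l, IsMonomial K f) :
    ∃ ds : List (Fin n →₀ ℕ), l = ds.map (mon K) := by
  induction l with
  | nil => exact ⟨[], rfl⟩
  | cons a l ih =>
    obtain ⟨ds, hds⟩ := ih fun f hf => h f (List.mem_cons_of_mem _ hf)
    obtain ⟨d, hd⟩ := h a List.mem_cons_self
    exact ⟨d :: ds, by simp [hd, hds]⟩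

lemma dim_le (J : Ideal (MvPolynomial (Fin n) K)) :
    ringKrullDim (MvPolynomial (Fin n) K ⧸ J) ≤ n := by
  refine (ringKrullDim_quotient_le J).trans ?_
  rw [MvPolynomial.ringKrullDim_of_isNoetherianRing]
  simp

lemma len_le {J : Ideal (MvPolynomial (Fin n) K)} {l : List (MvPolynomial (Fin n) K)}
    (h : WR J l) (h2 : J ⊔ Ideal.ofList l ≠ ⊤) : l.length ≤ n := by
  exact_mod_cast (wr_len l J h h2).trans (dim_le J)

lemma isReg_iff (J : Ideal (MvPolynomial (Fin n) K)) (l : List (MvPolynomial (Fin n) K)) :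
    RingTheory.Sequence.IsRegular (MvPolynomial (Fin n) K ⧸ J) l ↔
      WR J l ∧ J ⊔ Ideal.ofList l ≠ ⊤ := by
  rw [RingTheory.Sequence.isRegular_iff, wr_iff, top_ne_iff]

lemma isReg_iff_bot (l : List (MvPolynomial (Fin n) K)) :
    RingTheory.Sequence.IsRegular (MvPolynomial (Fin n) K) l ↔
      WR ⊥ l ∧ Ideal.ofList l ≠ ⊤ := by
  rw [RingTheory.Sequence.isRegular_iff, wr_iff_bot, smul_eq_mul, Ideal.mul_top, ne_comm]

lemma bdd_depth (J : Ideal (MvPolynomial (Fin n) K)) :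
    BddAbove {m | ∃ l : List (MvPolynomial (Fin n) K), l.length = m ∧
    (∀ f ∈ l, f ∈ Ideal.span (Set.range (X : Fin n → MvPolynomial (Fin n) K))) ∧
    RingTheory.Sequence.IsRegular (MvPolynomial (Fin n) K ⧸ J) l} := by
  refine ⟨n, ?_⟩
  rintro m ⟨l, rfl, -, h⟩
  rw [isReg_iff] at h
  exact len_le h.1 h.2

lemma bdd_nu (I : Ideal (MvPolynomial (Fin n) K)) :
    BddAbove {m | ∃ l : List (MvPolynomial (Fin n) K), l.length = m ∧
    (∀ f ∈ l, IsMonomial K f ∧ f ∈ I) ∧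
    RingTheory.Sequence.IsRegular (MvPolynomial (Fin n) K) l} := by
  refine ⟨n, ?_⟩
  rintro m ⟨l, rfl, -, h⟩
  rw [isReg_iff_bot] at h
  exact len_le h.1 (by simpa using h.2)

lemma minGen_exists (I : Ideal (MvPolynomial (Fin n) K)) (N : ℕ) : ∀ d : Fin n →₀ ℕ,
    d.degree ≤ N → mon K d ∈ I → ∃ w ≤ d, mon K w ∈ minGens K I := by
  induction N with
  | zero =>
    intro d hd h
    have hd0 : d = 0 := by
      rw [← Finsupp.degree_eq_zero_iff]; omega
    refine ⟨d, le_rfl, ⟨d, rfl⟩, h, ?_⟩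
    rintro v ⟨e, rfl⟩ _ hve
    rw [monomial_one_dvd_monomial_one] at hve
    subst hd0
    rw [nonpos_iff_eq_zero.1 hve]
  | succ N ih =>
    intro d hd h
    by_cases hmin : ∃ e, mon K e ∈ I ∧ e ≤ d ∧ e ≠ d
    · obtain ⟨e, heI, hle, hne⟩ := hmin
      obtain ⟨c, rfl⟩ := exists_add_of_le hle
      have hc : c.degree ≠ 0 := by
        rw [Ne, Finsupp.degree_eq_zero_iff]
        rintro rfl; simp at hne
      rw [map_add] at hd
      obtain ⟨w, hw, hw2⟩ := ih e (by omega) heI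
      exact ⟨w, hw.trans hle, hw2⟩
    · push Not at hmin
      refine ⟨d, le_rfl, ⟨d, rfl⟩, h, ?_⟩
      rintro v ⟨e, rfl⟩ heI hve
      rw [monomial_one_dvd_monomial_one] at hve
      rw [hmin e heI hve]

lemma ofList_mon (ds : List (Fin n →₀ ℕ)) :
    Ideal.ofList (ds.map (mon K)) = Ideal.span (mon K '' {d | d ∈ ds}) := by
  rw [Ideal.ofList]
  congr 1
  ext f
  simp

lemma wr_append {R : Type*} [CommRing R] (l : List R) (v : R) : ∀ J : Ideal R, WR J (l ++ [v]) →
    WR J l ∧ ∀ p, v * p ∈ J ⊔ Ideal.ofList l → p ∈ J ⊔ Ideal.ofList l := by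
  induction l with
  | nil => intro J h; exact ⟨trivial, by simpa using h.1⟩
  | cons a l ih =>
    intro J h
    have := ih _ h.2
    rw [Ideal.ofList_cons, ← sup_assoc]
    exact ⟨⟨h.1, this.1⟩, this.2⟩

lemma mon_mem_span {E : Set (Fin n →₀ ℕ)} {d : Fin n →₀ ℕ} :
    mon K d ∈ Ideal.span (mon K '' E) ↔ ∃ e ∈ E, e ≤ d := by
  rw [mem_ideal_span_monomial_image]
  simp

lemma pairwise_of_wr (ds : List (Fin n →₀ ℕ)) : (∀ d ∈ ds, d ≠ 0) →
    WR ⊥ (ds.map (mon K)) → ds.Pairwise fun a b => Disjoint a.support b.support := by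
  induction ds using List.reverseRecOn with
  | nil => intros; exact List.Pairwise.nil
  | append_singleton ds v ih =>
    intro h0 h
    rw [List.map_append, List.map_singleton] at h
    obtain ⟨h1, h2⟩ := wr_append _ _ _ h
    have hp := ih (fun d hd => h0 d (by simp [hd])) h1
    rw [List.pairwise_append]
    refine ⟨hp, List.pairwise_singleton _ _, ?_⟩
    intro u hu v' hv'
    rw [List.mem_singleton] at hv'
    subst hv'
    rw [bot_sup_eq, ofList_mon] at h2
    by_contra hnd
    rw [Finset.not_disjoint_iff] at hnd
    obtain ⟨i, hiu, hiv⟩ := hnd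
    have h3 := h2 (mon K (u - v')) (by
      rw [monomial_mul, one_mul, mon_mem_span]
      refine ⟨u, hu, ?_⟩
      intro j
      simp only [Finsupp.coe_add, Pi.add_apply, Finsupp.coe_tsub, Pi.sub_apply]
      omega)
    rw [mon_mem_span] at h3
    obtain ⟨e, he, hle⟩ := h3
    have heu : e = u := by
      by_contra hne
      have : Std.Symm fun a b : Fin n →₀ ℕ => Disjoint a.support b.support :=
        ⟨fun _ _ hxy => Disjoint.symm hxy⟩
      have hd : Disjoint e.support u.support := hp.forall he hu hne
      have he0 := h0 e (List.mem_append_left _ he)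
      obtain ⟨j, hj⟩ := Finsupp.support_nonempty_iff.2 he0
      have := Finset.disjoint_left.1 hd hj
      rw [Finsupp.mem_support_iff] at hj
      rw [Finsupp.notMem_support_iff] at this
      have := hle j
      simp only [Finsupp.coe_tsub, Pi.sub_apply] at this
      omega
    subst heu
    have := hle i
    rw [Finsupp.mem_support_iff] at hiu hiv
    simp only [Finsupp.coe_tsub, Pi.sub_apply] at this
    omega

lemma wr_of_pairwise (ds : List (Fin n →₀ ℕ)) : ∀ E : Set (Fin n →₀ ℕ),
    (∀ e ∈ E, ∀ d ∈ ds, Disjoint e.support d.support) →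
    (ds.Pairwise fun a b => Disjoint a.support b.support) →
    WR (Ideal.span (mon K '' E)) (ds.map (mon K)) := by
  induction ds with
  | nil => intros; trivial
  | cons v ds ih =>
    intro E hE hp
    rw [List.pairwise_cons] at hp
    refine ⟨fun p hpm => ?_, ?_⟩
    · rw [mem_ideal_span_monomial_image] at hpm ⊢
      intro d hd
      obtain ⟨e, he, hle⟩ := hpm (v + d) (by
        rw [mem_support_iff, coeff_monomial_mul, one_mul]
        exact mem_support_iff.1 hd)
      refine ⟨e, he, fun i => ?_⟩
      have h1 := hle i
      simp only [Finsupp.coe_add, Pi.add_apply] at h1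
      by_cases hi : i ∈ e.support
      · have := Finset.disjoint_left.1 (hE e he v List.mem_cons_self) hi
        rw [Finsupp.notMem_support_iff] at this
        omega
      · rw [Finsupp.notMem_support_iff] at hi
        omega
    · have : Ideal.span (mon K '' E) ⊔ Ideal.span {mon K v} =
          Ideal.span (mon K '' (insert v E)) := by
        rw [Set.image_insert_eq, Ideal.span_insert, sup_comm]
      show WR (Ideal.span (mon K '' E) ⊔ Ideal.span {mon K v}) _
      rw [this]
      refine ih _ ?_ hp.2
      rintro e (rfl | he) d hd
      · exact hp.1 d hd
      · exact hE e he d (List.mem_cons_of_mem _ hd)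

lemma relprime_iff (a b : Fin n →₀ ℕ) :
    IsRelPrime (mon K a) (mon K b) ↔ Disjoint a.support b.support := by
  constructor
  · intro h
    rw [Finset.disjoint_left]
    intro i ha hb
    have hu : IsUnit (X i : MvPolynomial (Fin n) K) := by
      apply h
      · rw [X_dvd_monomial]; right; exact Finsupp.mem_support_iff.1 ha
      · rw [X_dvd_monomial]; right; exact Finsupp.mem_support_iff.1 hb
    exact (X_prime (R := K) (i := i)).not_isUnit hu
  · intro h c ha hb
    rw [dvd_monomial_one_iff_exists] at ha
    obtain ⟨m, u, hm, hu, rfl⟩ := ha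
    have hmb : m ≤ b := by
      have := (Dvd.intro_left _ (by rw [C_mul_monomial, mul_one] : C u * mon K m = monomial m u)).trans hb
      rwa [monomial_one_dvd_monomial_one] at this
    have : m = 0 := by
      ext i
      by_contra hi
      have hi : m i ≠ 0 := hi
      have h1 := hm i
      have h2 := hmb i
      have ha : i ∈ a.support := by rw [Finsupp.mem_support_iff]; omega
      have hb : i ∈ b.support := by rw [Finsupp.mem_support_iff]; omega
      exact Finset.disjoint_left.1 h ha hb
    subst this
    exact hu.map C

lemma sqfree_list (ds : List (Fin n →₀ ℕ)) :
    Squarefree (ds.map (mon K)).prod ↔ (∀ d ∈ ds, Squarefree (mon K d)) ∧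
      ds.Pairwise fun a b => Disjoint a.support b.support := by
  have hrel : ∀ (a : Fin n →₀ ℕ) (ds : List (Fin n →₀ ℕ)),
      IsRelPrime (mon K a) (ds.map (mon K)).prod ↔ ∀ d ∈ ds, Disjoint a.support d.support := by
    intro a ds
    induction ds with
    | nil => simp [isRelPrime_one_right]
    | cons b ds ih =>
      rw [List.map_cons, List.prod_cons, IsRelPrime.mul_right_iff, ih, relprime_iff,
        List.forall_mem_cons]
  induction ds with
  | nil => simp
  | cons a ds ih =>
    rw [List.map_cons, List.prod_cons, squarefree_mul_iff, hrel, List.forall_mem_cons,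
      List.pairwise_cons]
    constructor
    · rintro ⟨h1, h2, h3⟩
      have h4 := ih.1 h3
      exact ⟨⟨h2, h4.1⟩, h1, h4.2⟩
    · rintro ⟨⟨h1, h2⟩, h3, h4⟩
      exact ⟨h3, h1, ih.2 ⟨h2, h4⟩⟩

lemma sqfree_le {d : Fin n →₀ ℕ} (h : Squarefree (mon K d)) (i : Fin n) : d i ≤ 1 := by
  by_contra hi
  push Not at hi
  refine (X_prime (R := K) (i := i)).not_isUnit (h (X i) ?_)
  rw [X, monomial_mul, one_mul, monomial_one_dvd_monomial_one, ← Finsupp.single_add]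
  intro j
  by_cases hj : i = j
  · subst hj; simp; omega
  · simp [hj]

lemma prod_mon (ds : List (Fin n →₀ ℕ)) : (ds.map (mon K)).prod = mon K ds.sum := by
  induction ds with
  | nil => rfl
  | cons a ds ih => rw [List.map_cons, List.prod_cons, ih, List.sum_cons, monomial_mul, one_mul]

lemma sqPow_eq_span (I : Ideal (MvPolynomial (Fin n) K)) (k : ℕ) :
    ∃ E : Set (Fin n →₀ ℕ), sqPow K I k = Ideal.span (mon K '' E) ∧
      ∀ e ∈ E, Squarefree (mon K e) := by
  refine ⟨{e | Squarefree (mon K e) ∧ ∃ l : List (MvPolynomial (Fin n) K),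
    l.length = k ∧ (∀ f ∈ l, f ∈ minGens K I) ∧ mon K e = l.prod}, ?_, fun e he => he.1⟩
  rw [sqPow]
  congr 1
  ext u
  constructor
  · rintro ⟨hu, l, hl, hlm, rfl⟩
    obtain ⟨ds, rfl⟩ := exists_list l fun f hf => (hlm f hf).1
    rw [prod_mon] at hu
    exact ⟨ds.sum, ⟨hu, _, hl, hlm, (prod_mon ds).symm⟩, (prod_mon ds).symm⟩
  · rintro ⟨e, ⟨h1, h2⟩, rfl⟩
    exact ⟨h1, h2⟩

lemma one_not {I : Ideal (MvPolynomial (Fin n) K)} (h : I ≠ ⊤) {d : Fin n →₀ ℕ}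
    (hd : mon K d ∈ I) : d ≠ 0 := by
  rintro rfl
  exact h ((Ideal.eq_top_iff_one I).2 hd)

lemma part_a (I : Ideal (MvPolynomial (Fin n) K)) (hI : ∀ u ∈ minGens K I, Squarefree u)
    (hp : I ≠ ⊤) (k : ℕ) : sqPow K I k ≠ ⊥ ↔ k ≤ monNu K I := by
  constructor
  · intro h
    rw [sqPow, Ne, Ideal.span_eq_bot] at h
    push Not at h
    obtain ⟨u, ⟨hu, l, hl, hlm, rfl⟩, -⟩ := h
    obtain ⟨ds, rfl⟩ := exists_list l fun f hf => (hlm f hf).1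
    rw [sqfree_list] at hu
    refine le_csSup (bdd_nu I) ⟨_, hl, fun f hf => ⟨(hlm f hf).1, (hlm f hf).2.1⟩, ?_⟩
    rw [isReg_iff_bot]
    constructor
    · have := wr_of_pairwise (K := K) ds ∅ (by simp) hu.2
      simpa using this
    · intro htop
      apply hp
      rw [eq_top_iff, ← htop, Ideal.ofList, Ideal.span_le]
      exact fun f hf => (hlm f hf).2.1
  · intro h
    have hne : Set.Nonempty {m | ∃ l : List (MvPolynomial (Fin n) K), l.length = m ∧
        (∀ f ∈ l, IsMonomial K f ∧ f ∈ I) ∧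
        RingTheory.Sequence.IsRegular (MvPolynomial (Fin n) K) l} :=
      ⟨0, [], rfl, by simp, RingTheory.Sequence.IsRegular.nil _ _⟩
    obtain ⟨l, hl, hlm, hreg⟩ := Nat.sSup_mem hne (bdd_nu I)
    change l.length = monNu K I at hl
    obtain ⟨ds, rfl⟩ := exists_list l fun f hf => (hlm f hf).1
    have hdI : ∀ d ∈ ds, mon K d ∈ I := fun d hd => (hlm _ (List.mem_map_of_mem hd)).2
    rw [isReg_iff_bot] at hreg
    have hpw := pairwise_of_wr ds (fun d hd => one_not hp (hdI d hd)) hreg.1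
    have hch : ∀ d : Fin n →₀ ℕ, ∃ w, d ∈ ds → w ≤ d ∧ mon K w ∈ minGens K I := by
      intro d
      by_cases hd : d ∈ ds
      · obtain ⟨w, hw⟩ := minGen_exists I _ d le_rfl (hdI d hd)
        exact ⟨w, fun _ => hw⟩
      · exact ⟨0, fun h => absurd h hd⟩
    choose w hw using hch
    have hmem : ∀ d ∈ ds.take k, d ∈ ds := fun d hd => List.mem_of_mem_take hd
    have hws : Squarefree (((ds.take k).map w).map (mon K)).prod := by
      rw [sqfree_list]
      constructor
      · intro d hd
        obtain ⟨e, he, rfl⟩ := List.mem_map.1 hd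
        exact hI _ (hw e (hmem e he)).2
      · rw [List.pairwise_map]
        have h1 := hpw.sublist (List.take_sublist k ds)
        refine h1.imp_of_mem ?_
        intro a b ha hb hab
        exact hab.mono (Finsupp.support_mono (hw a (hmem a ha)).1)
          (Finsupp.support_mono (hw b (hmem b hb)).1)
    intro hbot
    rw [sqPow, Ideal.span_eq_bot] at hbot
    refine hws.ne_zero (hbot _ ⟨hws, _, ?_, ?_, rfl⟩)
    · simp at hl ⊢; omega
    · intro f hf
      simp only [List.map_map, List.mem_map, Function.comp] at hf
      obtain ⟨e, he, rfl⟩ := hf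
      exact (hw e (hmem e he)).2

lemma mem_max (p : MvPolynomial (Fin n) K) (h : constantCoeff p = 0) :
    p ∈ Ideal.span (Set.range (X : Fin n → MvPolynomial (Fin n) K)) := by
  rw [← Set.image_univ, mem_ideal_span_X_image]
  intro m hm
  by_contra hc
  push Not at hc
  have : m = 0 := by
    ext i
    exact hc i (Set.mem_univ _)
  subst this
  exact mem_support_iff.1 hm h

lemma part_b (E : Set (Fin n →₀ ℕ)) (hE : ∀ e ∈ E, Squarefree (mon K e)) (hne : E.Nonempty) :
    minDeg K (Ideal.span (mon K '' E)) - 1 ≤ qdepth K (Ideal.span (mon K '' E)) := by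
  set J := Ideal.span (mon K '' E) with hJ
  have hcard : ∀ e ∈ E, e.degree = e.support.card := by
    intro e he
    rw [Finsupp.degree_apply, Finset.card_eq_sum_ones]
    refine Finset.sum_congr rfl fun i hi => ?_
    have := sqfree_le (hE e he) i
    rw [Finsupp.mem_support_iff] at hi
    omega
  have hmin : ∀ e ∈ E, minDeg K J ≤ e.support.card := by
    intro e he
    obtain ⟨w, hw, hwm⟩ := minGen_exists J _ e le_rfl (Ideal.subset_span ⟨e, he, rfl⟩)
    have h1 : minDeg K J ≤ totalDegree (mon K w) := Nat.sInf_le ⟨_, hwm, rfl⟩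
    rw [totalDegree_monomial _ one_ne_zero] at h1
    rw [← hcard e he]
    refine h1.trans ?_
    obtain ⟨c, rfl⟩ := exists_add_of_le hw
    rw [map_add]
    show w.degree ≤ _
    omega
  rcases Nat.eq_zero_or_pos (minDeg K J) with h0 | hpos
  · simp [h0]
  let D : Set (Finset (Fin n)) := {F | ∀ e ∈ E, ¬ e.support ⊆ F}
  have hD : IsLowerSet D := fun a b hab ha e he hs => ha e he (hs.trans hab)
  have hJD : J = NF D hD := by
    ext p
    rw [hJ, mem_ideal_span_monomial_image, mem_NF]
    refine forall_congr' fun d => ?_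
    rw [mem_support_iff]
    refine imp_congr_right fun _ => ?_
    simp only [D, Set.mem_ofPred_eq, not_forall, not_not]
    constructor
    · rintro ⟨e, he, hle⟩
      exact ⟨e, he, Finsupp.support_mono hle⟩
    · rintro ⟨e, he, hs⟩
      refine ⟨e, he, fun i => ?_⟩
      by_cases hi : i ∈ e.support
      · have h1 := Finsupp.mem_support_iff.1 (hs hi)
        have := sqfree_le (hE e he) i
        omega
      · rw [Finsupp.notMem_support_iff.1 hi]; exact Nat.zero_le _
  have hn : minDeg K J ≤ n := by
    obtain ⟨e, he⟩ := hne
    refine (hmin e he).trans ?_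
    simpa using e.support.card_le_univ
  have hwr : WR J (hl K n 0 (minDeg K J - 1)) := by
    generalize hr : minDeg K J - 1 = r
    rw [hJD]
    refine wr_main n _ _ D hD (by omega) ?_
    intro F hF e he hs
    have h1 := hmin e he
    have h2 := Finset.card_le_card hs
    omega
  refine le_csSup (bdd_depth J) ⟨_, hl_length K n _ 0, fun f hf => ?_, ?_⟩
  · exact mem_max _ (hl_const _ _ _ f hf)
  · rw [isReg_iff]
    refine ⟨hwr, fun htop => ?_⟩
    have : J ⊔ Ideal.ofList (hl K n 0 (minDeg K J - 1)) ≤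
        RingHom.ker (constantCoeff : MvPolynomial (Fin n) K →+* K) := by
      refine sup_le ?_ ?_
      · rw [hJ, Ideal.span_le]
        rintro _ ⟨e, he, rfl⟩
        have h1 := hmin e he
        have he0 : e ≠ 0 := by
          rintro rfl
          simp at h1; omega
        simp [RingHom.mem_ker, constantCoeff_monomial, he0]
      · rw [Ideal.ofList, Ideal.span_le]
        intro f hf
        exact hl_const _ _ _ f hf
    rw [htop] at this
    have h1 := this (Submodule.mem_top (x := 1))
    simp [RingHom.mem_ker] at h1

end fin
end SqP

/-- For a (proper) squarefree monomial ideal `I ⊂ S`: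
(a) `I^{[k]} = 0` iff `k > ν(I)`; and (b) for `1 ≤ k ≤ ν(I)` one has
`depth(S/I^{[k]}) ≥ d_k − 1`, i.e. `g_I(k) ≥ 0`. -/
theorem sqPow_eq_bot_iff_and_depth_ge {K : Type*} [Field K] {n : ℕ}
    (I : Ideal (MvPolynomial (Fin n) K))
    (hI : IsSqfreeMonomialIdeal K I) (hproper : I ≠ ⊤) :
    (∀ k : ℕ, 1 ≤ k → (sqPow K I k = ⊥ ↔ monNu K I < k)) ∧
    (∀ k : ℕ, 1 ≤ k → k ≤ monNu K I →
      minDeg K (sqPow K I k) - 1 ≤ qdepth K (sqPow K I k)) := by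
  have ha := SqP.part_a I hI.2 hproper
  refine ⟨fun k _ => ?_, fun k _ hk => ?_⟩
  · rw [← not_le, ← ha k, not_not]
  · obtain ⟨E, hE, hsq⟩ := SqP.sqPow_eq_span I k
    have hne := (ha k).2 hk
    rw [hE] at hne ⊢
    refine SqP.part_b E hsq ?_
    by_contra h
    rw [Set.not_nonempty_iff_eq_empty] at h
    subst h
    simp at hne
end

section
/- Let I ⊆ J ⊆ S = K[x_1,…,x_n] be squarefree monomial ideals, and suppose that I^{[k]} = J^{[k]} for some positive integer k. Then I^{[ℓ]} = J^{[ℓ]} for all ℓ ≥ k. -/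
open MvPolynomial

section Helpers

variable {K : Type*} [Field K] {σ : Type*} [Fintype σ] [DecidableEq σ]

lemma isMonomial_list_prod (l : List (MvPolynomial σ K)) (hl : ∀ f ∈ l, IsMonomial K f) :
    IsMonomial K l.prod := by
  induction l with
  | nil => exact ⟨0, by simp⟩
  | cons a l ih =>
    obtain ⟨d, hd⟩ := hl a (by simp)
    obtain ⟨e, he⟩ := ih (fun f hf => hl f (by simp [hf]))
    exact ⟨d + e, by rw [List.prod_cons, hd, he, monomial_mul, one_mul]⟩

lemma exists_dvd_of_mem_span (A : Set (MvPolynomial σ K)) (hA : ∀ u ∈ A, IsMonomial K u)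
    (u : MvPolynomial σ K) (hu : IsMonomial K u) (h : u ∈ Ideal.span A) :
    ∃ a ∈ A, a ∣ u := by
  obtain ⟨d, rfl⟩ := hu
  have hA' : A = (fun s => monomial s (1 : K)) '' {s | monomial s (1 : K) ∈ A} := by
    ext a
    constructor
    · intro ha
      obtain ⟨e, rfl⟩ := hA a ha
      exact ⟨e, ha, rfl⟩
    · rintro ⟨e, he, rfl⟩
      exact he
  rw [hA', mem_ideal_span_monomial_image] at h
  obtain ⟨e, he, hle⟩ := h d (by simp [mem_support_iff])
  exact ⟨_, he, by rw [monomial_dvd_monomial]; exact ⟨Or.inr hle, one_dvd _⟩⟩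

lemma exists_minGens_dvd (J : Ideal (MvPolynomial σ K)) (u : MvPolynomial σ K)
    (hu : IsMonomial K u) (h : u ∈ J) : ∃ v ∈ minGens K J, v ∣ u := by
  obtain ⟨d, rfl⟩ := hu
  induction d using WellFoundedLT.induction with
  | ind d ih =>
    by_cases hm : ∃ e < d, monomial e (1 : K) ∈ J
    · obtain ⟨e, hed, he⟩ := hm
      obtain ⟨v, hv, hvd⟩ := ih e hed he
      refine ⟨v, hv, hvd.trans ?_⟩
      rw [monomial_dvd_monomial]
      exact ⟨Or.inr hed.le, one_dvd _⟩
    · refine ⟨_, ⟨⟨d, rfl⟩, h, ?_⟩, dvd_rfl⟩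
      rintro v ⟨e, rfl⟩ hv hdvd
      rw [monomial_dvd_monomial] at hdvd
      have hle : e ≤ d := hdvd.1.resolve_left one_ne_zero
      by_contra hne
      exact hm ⟨e, lt_of_le_of_ne hle (fun h => hne (by rw [h])), hv⟩

lemma exists_list_minGens (J : Ideal (MvPolynomial σ K)) (l : List (MvPolynomial σ K))
    (hl : ∀ f ∈ l, IsMonomial K f ∧ f ∈ J) :
    ∃ l' : List (MvPolynomial σ K), l'.length = l.length ∧ (∀ f ∈ l', f ∈ minGens K J) ∧
      l'.prod ∣ l.prod := by
  induction l with
  | nil => exact ⟨[], by simp⟩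
  | cons a l ih =>
    obtain ⟨l', h1, h2, h3⟩ := ih (fun f hf => hl f (by simp [hf]))
    obtain ⟨v, hv, hva⟩ := exists_minGens_dvd J a (hl a (by simp)).1 (hl a (by simp)).2
    refine ⟨v :: l', by simp [h1], ?_, ?_⟩
    · intro f hf
      rcases List.mem_cons.1 hf with rfl | hf
      · exact hv
      · exact h2 f hf
    · rw [List.prod_cons, List.prod_cons]
      exact mul_dvd_mul hva h3

lemma list_prod_mem_sqPow (J : Ideal (MvPolynomial σ K)) (m : ℕ) (l : List (MvPolynomial σ K))
    (hm : l.length = m) (hl : ∀ f ∈ l, IsMonomial K f ∧ f ∈ J) (hs : Squarefree l.prod) :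
    l.prod ∈ sqPow K J m := by
  obtain ⟨l', h1, h2, h3⟩ := exists_list_minGens J l hl
  exact Ideal.mem_of_dvd _ h3 (Ideal.subset_span
    ⟨hs.squarefree_of_dvd h3, l', h1.trans hm, h2, rfl⟩)

lemma exists_of_mem_sqPow (I : Ideal (MvPolynomial σ K)) (m : ℕ) (u : MvPolynomial σ K)
    (hu : IsMonomial K u) (h : u ∈ sqPow K I m) :
    ∃ l : List (MvPolynomial σ K), l.length = m ∧ (∀ f ∈ l, IsMonomial K f ∧ f ∈ I) ∧
      l.prod ∣ u := by
  obtain ⟨a, ⟨_, l, h1, h2, rfl⟩, ha⟩ := exists_dvd_of_mem_span _ (by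
    rintro _ ⟨_, l, _, h2, rfl⟩
    exact isMonomial_list_prod l (fun f hf => (h2 f hf).1)) u hu h
  exact ⟨l, h1, fun f hf => ⟨(h2 f hf).1, (h2 f hf).2.1⟩, ha⟩

lemma sqPow_mono {I J : Ideal (MvPolynomial σ K)} (hIJ : I ≤ J) (m : ℕ) :
    sqPow K I m ≤ sqPow K J m := by
  refine Ideal.span_le.2 ?_
  rintro _ ⟨hs, l, h1, h2, rfl⟩
  exact list_prod_mem_sqPow J m l h1 (fun f hf => ⟨(h2 f hf).1, hIJ (h2 f hf).2.1⟩) hs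

lemma sqPow_step {I J : Ideal (MvPolynomial σ K)} (hIJ : I ≤ J) (m : ℕ) (hm : 1 ≤ m)
    (h : sqPow K I m = sqPow K J m) : sqPow K I (m + 1) = sqPow K J (m + 1) := by
  refine le_antisymm (sqPow_mono hIJ _) (Ideal.span_le.2 ?_)
  rintro _ ⟨hs, l, h1, h2, rfl⟩
  have h2' : ∀ f ∈ l, IsMonomial K f ∧ f ∈ J := fun f hf => ⟨(h2 f hf).1, (h2 f hf).2.1⟩
  clear h2
  match l, h1 with
  | v :: l, h1 =>
    rw [List.prod_cons] at hs ⊢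
    have hv := h2' v (by simp)
    have hl : ∀ f ∈ l, IsMonomial K f ∧ f ∈ J := fun f hf => h2' f (by simp [hf])
    have hl1 : l.length = m := by simpa using h1
    have m1 := list_prod_mem_sqPow J m l hl1 hl (hs.squarefree_of_dvd (dvd_mul_left _ _))
    rw [← h] at m1
    obtain ⟨w, w1, w2, w3⟩ := exists_of_mem_sqPow I m _
      (isMonomial_list_prod l (fun f hf => (hl f hf).1)) m1
    match w, w1 with
    | [], w1 => simp at w1; omega
    | a :: w, w1 =>
      rw [List.prod_cons] at w3
      have d1 : v * w.prod ∣ v * l.prod := mul_dvd_mul_left v ((dvd_mul_left _ _).trans w3)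
      have hvw : ∀ f ∈ v :: w, IsMonomial K f ∧ f ∈ J := by
        intro f hf
        rcases List.mem_cons.1 hf with rfl | hf
        · exact hv
        · exact ⟨(w2 f (by simp [hf])).1, hIJ (w2 f (by simp [hf])).2⟩
      have m2 := list_prod_mem_sqPow J m (v :: w) (by simpa using w1) hvw
        (by rw [List.prod_cons]; exact hs.squarefree_of_dvd d1)
      rw [← h] at m2
      obtain ⟨z, z1, z2, z3⟩ := exists_of_mem_sqPow I m _
        (isMonomial_list_prod (v :: w) (fun f hf => (hvw f hf).1)) m2
      rw [List.prod_cons] at z3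
      have d2 : (a :: z).prod ∣ v * l.prod := by
        rw [List.prod_cons]
        refine (mul_dvd_mul_left a z3).trans ?_
        rw [mul_left_comm]
        exact mul_dvd_mul_left v w3
      refine Ideal.mem_of_dvd _ d2 (list_prod_mem_sqPow I (m + 1) (a :: z) (by simp [z1]) ?_
        (hs.squarefree_of_dvd d2))
      intro f hf
      rcases List.mem_cons.1 hf with rfl | hf
      · exact w2 _ (by simp)
      · exact z2 f hf

end Helpers

/-- If `I ⊆ J` are squarefree monomial ideals with
`I^{[k]} = J^{[k]}` for some positive integer `k`, then `I^{[ℓ]} = J^{[ℓ]}`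
for all `ℓ ≥ k`. -/
theorem sqPow_eq_of_sqPow_eq {K : Type*} [Field K] {n : ℕ}
    (I J : Ideal (MvPolynomial (Fin n) K))
    (hI : IsSqfreeMonomialIdeal K I) (hJ : IsSqfreeMonomialIdeal K J)
    (hIJ : I ≤ J) (k : ℕ) (hk : 1 ≤ k) (h : sqPow K I k = sqPow K J k) :
    ∀ l : ℕ, k ≤ l → sqPow K I l = sqPow K J l := by
  intro l hl
  induction l, hl using Nat.le_induction with
  | base => exact h
  | succ m hm ih => exact sqPow_step hIJ m (hk.trans hm) ih
end

section
/- Let I ⊂ S = K[x_1,…,x_n] be a matroidal ideal generated in degree d with supp(I) = [n] (every variable divides some minimal generator). Then depth(S/I) = d − 1. -/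
open MvPolynomial

section Koszul
variable {S : Type*} [CommRing S] {σ : Type*}

def kd (w : σ → S) : List σ → (List σ → S) → S
  | [], _ => 0
  | j :: t, c => w j * c t - kd w t (fun s => c (j :: s))

theorem kd_add (w : σ → S) (t : List σ) : ∀ (c b : List σ → S),
    kd w t (fun s => c s + b s) = kd w t c + kd w t b := by
  induction t with
  | nil => intro c b; simp [kd]
  | cons j t ih => intro c b; simp only [kd, ih]; ring

theorem kd_smul (w : σ → S) (a : S) (t : List σ) : ∀ (c : List σ → S),
    kd w t (fun s => a * c s) = a * kd w t c := by
  induction t with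
  | nil => intro c; simp [kd]
  | cons j t ih => intro c; simp only [kd, ih]; ring

theorem kd_neg (w : σ → S) (t : List σ) (c : List σ → S) :
    kd w t (fun s => - c s) = - kd w t c := by
  have := kd_smul w (-1) t c
  simpa using this

theorem kd_sub (w : σ → S) (t : List σ) (c b : List σ → S) :
    kd w t (fun s => c s - b s) = kd w t c - kd w t b := by
  have := kd_add w t c (fun s => - b s)
  rw [kd_neg] at this
  simpa [sub_eq_add_neg] using this

theorem kd_zero (w : σ → S) (t : List σ) : kd w t (fun _ => 0) = 0 := by
  have := kd_smul w 0 t (fun _ => 0)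
  simpa using this

theorem kd_sum {ι : Type*} (w : σ → S) (t : List σ) (F : Finset ι) (c : ι → List σ → S) :
    kd w t (fun s => ∑ i ∈ F, c i s) = ∑ i ∈ F, kd w t (c i) := by
  classical
  induction F using Finset.induction_on with
  | empty => simpa using kd_zero w t
  | insert a F ha ih => simp only [Finset.sum_insert ha, kd_add, ih]

theorem kd_mem' (w : σ → S) (A B : Ideal S) (hAB : ∀ j, ∀ f ∈ A, w j * f ∈ B) (t : List σ) :
    ∀ c : List σ → S, (∀ s, s.length + 1 = t.length → c s ∈ A) → kd w t c ∈ B := by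
  induction t with
  | nil => intro c _; simp [kd]
  | cons j t ih =>
    intro c hc
    simp only [kd]
    refine B.sub_mem (hAB _ _ (hc t (by simp))) (ih _ ?_)
    intro s hs
    exact hc _ (by simp [hs])

theorem kd_mem (w : σ → S) (A : Ideal S) (t : List σ)
    (c : List σ → S) (h : ∀ s, s.length + 1 = t.length → c s ∈ A) : kd w t c ∈ A :=
  kd_mem' w A A (fun _ _ hf => A.mul_mem_left _ hf) t c h

theorem kd_anti (w v : σ → S) (t : List σ) : ∀ c : List σ → S,
    kd w t (fun s => kd v s c) = - kd v t (fun s => kd w s c) := by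
  induction t with
  | nil => intro c; simp [kd]
  | cons j t ih =>
    intro c
    simp only [kd, kd_sub, kd_smul]
    rw [ih]
    ring

theorem kd_sq (w : σ → S) (t : List σ) : ∀ c : List σ → S,
    kd w t (fun s => kd w s c) = 0 := by
  induction t with
  | nil => intro c; simp [kd]
  | cons j t ih =>
    intro c
    simp only [kd, kd_sub, kd_smul]
    rw [ih]
    ring

theorem kd_add_left (w v : σ → S) (t : List σ) : ∀ c : List σ → S,
    kd (w + v) t c = kd w t c + kd v t c := by
  induction t with
  | nil => intro c; simp [kd]
  | cons j t ih => intro c; simp only [kd, ih, Pi.add_apply]; ring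

theorem kd_zero_left (w : σ → S) (t : List σ) (h : ∀ j ∈ t, w j = 0) : ∀ c : List σ → S,
    kd w t c = 0 := by
  induction t with
  | nil => intro c; simp [kd]
  | cons j t ih =>
    intro c
    simp only [kd]
    rw [ih (fun i hi => h i (by simp [hi])), h j (by simp)]
    ring

def KD (x : σ → S) (r : ℕ) (I : Ideal S) : Prop :=
  ∀ i < r, ∀ c : List σ → S, (∀ t : List σ, t.length = i + 1 → kd x t c ∈ I) →
    ∃ b : List σ → S, ∀ t : List σ, t.length = i → c t - kd x t b ∈ I

theorem KD.mono {x : σ → S} {r r' : ℕ} {I : Ideal S} (h : KD x r I) (hr : r' ≤ r) : KD x r' I :=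
  fun i hi => h i (lt_of_lt_of_le hi hr)

theorem exists_decomp {I : Ideal S} {g f : S} (h : f ∈ I ⊔ Ideal.span {g}) :
    ∃ a, f - g * a ∈ I := by
  obtain ⟨y, hy, z, hz, rfl⟩ := Submodule.mem_sup.1 h
  obtain ⟨a, rfl⟩ := Ideal.mem_span_singleton'.1 hz
  exact ⟨a, by simpa [mul_comm] using hy⟩

theorem mem_of_decomp {I : Ideal S} {g f : S} (a : S) (h : f - g * a ∈ I) :
    f ∈ I ⊔ Ideal.span {g} := by
  have : f = (f - g * a) + g * a := by ring
  rw [this]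
  exact Ideal.add_mem _ (Ideal.mem_sup_left h)
    (Ideal.mem_sup_right (Ideal.mul_mem_right _ _ (Ideal.mem_span_singleton_self g)))

theorem KD.step {x : σ → S} {r : ℕ} {J P : Ideal S} {u : S}
    (h1 : ∀ f, u * f ∈ J → f ∈ P) (h2 : ∀ f ∈ P, u * f ∈ J)
    (hP : KD x (r + 1) P) (hJ : KD x r J) : KD x r (J ⊔ Ideal.span {u}) := by
  classical
  intro i hi c hc
  have : ∀ t : List σ, ∃ a, t.length = i + 1 → kd x t c - u * a ∈ J := by
    intro t
    by_cases ht : t.length = i + 1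
    · obtain ⟨a, ha⟩ := exists_decomp (hc t ht)
      exact ⟨a, fun _ => ha⟩
    · exact ⟨0, fun h => absurd h ht⟩
  choose a ha using this
  obtain ⟨e, he⟩ := hP (i + 1) (by omega) a (by
    intro t ht
    apply h1
    have h3 : kd x t (fun s => kd x s c - u * a s) ∈ J :=
      kd_mem x J t _ (fun s hs => ha s (by omega))
    rw [kd_sub, kd_sq, kd_smul, zero_sub] at h3
    simpa using J.neg_mem h3)
  obtain ⟨b, hb⟩ := hJ i hi (fun s => c s - u * e s) (by
    intro t ht
    rw [kd_sub, kd_smul]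
    have h3 := J.add_mem (ha t ht) (h2 _ (he t ht))
    convert h3 using 1
    ring)
  refine ⟨b, fun t ht => mem_of_decomp (e t) ?_⟩
  have := hb t ht
  convert this using 1
  ring

theorem KD.reg [Fintype σ] {x : σ → S} {r : ℕ} {I : Ideal S} {g : S} (α : σ → S)
    (hg : g = ∑ j, α j * x j) (h1 : ∀ f, g * f ∈ I → f ∈ I)
    (h : KD x r (I ⊔ Ideal.span {g})) : KD x (r + 1) I := by
  classical
  intro i hi c hc
  have key : ∀ t : List σ, t.length = i →
      g * c t - kd x t (fun s => ∑ j, α j * c (j :: s)) ∈ I := by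
    intro t ht
    have : g * c t - kd x t (fun s => ∑ j, α j * c (j :: s)) = ∑ j, α j * kd x (j :: t) c := by
      rw [kd_sum, hg, Finset.sum_mul, ← Finset.sum_sub_distrib]
      refine Finset.sum_congr rfl fun j _ => ?_
      rw [kd_smul]
      simp only [kd]
      ring
    rw [this]
    exact Ideal.sum_mem _ fun j _ => I.mul_mem_left _ (hc _ (by simp [ht]))
  rcases i with _ | i
  · refine ⟨fun _ => 0, fun t ht => ?_⟩
    have := key t ht
    obtain rfl : t = [] := List.length_eq_zero_iff.1 ht
    simp only [kd, sub_zero] at this ⊢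
    exact h1 _ this
  · obtain ⟨e, he⟩ := h i (by omega) (fun s => ∑ j, α j * c (j :: s)) (by
      intro t ht
      have := key t ht
      apply mem_of_decomp (c t)
      simpa using I.neg_mem this)
    have : ∀ s : List σ, ∃ a, s.length = i →
        ((∑ j, α j * c (j :: s)) - kd x s e) - g * a ∈ I := by
      intro t
      by_cases ht : t.length = i
      · obtain ⟨a, ha⟩ := exists_decomp (he t ht)
        exact ⟨a, fun _ => ha⟩
      · exact ⟨0, fun h => absurd h ht⟩
    choose b hb using this
    refine ⟨b, fun t ht => h1 _ ?_⟩
    have h3 : kd x t (fun s => ((∑ j, α j * c (j :: s)) - kd x s e) - g * b s) ∈ I :=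
      kd_mem x I t _ (fun s hs => hb s (by omega))
    rw [kd_sub, kd_sub, kd_sq, kd_smul] at h3
    have := I.add_mem (key t ht) h3
    convert this using 1
    ring

/-- iterated products -/
def kprod : List (σ → S) → List σ → S
  | [], _ => 1
  | w :: ws, t => kd w t (kprod ws)

theorem kd_kprod_mem (w : σ → S) (ws : List (σ → S)) (h : w ∈ ws) (t : List σ) :
    kd w t (kprod ws) = 0 := by
  induction ws generalizing t with
  | nil => simp at h
  | cons v ws ih =>
    by_cases hv : w = v
    · subst hv
      exact kd_sq w t _
    · have hw : w ∈ ws := by simpa [hv] using h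
      have : kd w t (kprod (v :: ws)) = kd w t (fun s => kd v s (kprod ws)) := rfl
      rw [this, kd_anti]
      simp only [ih hw, kd_zero, neg_zero]

theorem kd_sum_kprod (ws ws' : List (σ → S)) (h : ∀ w ∈ ws', w ∈ ws) (t : List σ) :
    kd ws'.sum t (kprod ws) = 0 := by
  induction ws' with
  | nil => exact kd_zero_left _ _ (by simp) _
  | cons v ws' ih =>
    rw [List.sum_cons, kd_add_left, ih (fun w hw => h w (by simp [hw])),
      kd_kprod_mem _ _ (h v (by simp)), add_zero]

def bw (x : σ → S) (β : σ → ℕ) (k : ℕ) : σ → S := fun j => if β j = k then x j else 0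

theorem kprod_mem (x : σ → S) (β : σ → ℕ) (L : List ℕ) : ∀ t : List σ, t.length = L.length →
    kprod (L.map (bw x β)) t ∈
      Ideal.span {f | ∃ s : List σ, s.map β = L ∧ f = (s.map x).prod} := by
  induction L with
  | nil => intro t _; exact Ideal.subset_span ⟨[], rfl, rfl⟩
  | cons k L ih =>
    intro t ht
    simp only [List.map_cons, kprod]
    refine kd_mem' _ _ _ ?_ t _ (fun s hs => ih s (by simp at ht; omega))
    intro j f hf
    by_cases hj : β j = k
    · simp only [bw, hj, if_true]
      induction hf using Submodule.span_induction with
      | mem f hf =>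
        obtain ⟨s, hs, rfl⟩ := hf
        exact Ideal.subset_span ⟨j :: s, by simp [hs, hj], by simp⟩
      | zero => simp
      | add a b _ _ ha hb => rw [mul_add]; exact Ideal.add_mem _ ha hb
      | smul a b _ hb =>
        rw [smul_eq_mul, mul_left_comm]; exact Ideal.mul_mem_left _ _ hb
    · simp [bw, hj]

theorem kprod_val (x : σ → S) (β : σ → ℕ) (t : List σ) : (t.map β).Nodup →
    kprod ((t.map β).map (bw x β)) t = (t.map x).prod := by
  induction t with
  | nil => intro _; simp [kprod]
  | cons j t ih =>
    intro h
    simp only [List.map_cons, List.nodup_cons] at h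
    simp only [List.map_cons, kprod, kd, List.prod_cons]
    rw [ih h.2, kd_zero_left]
    · simp [bw]
    · intro i hi
      simp only [bw, ite_eq_right_iff]
      intro h'
      exact absurd (h' ▸ List.mem_map_of_mem hi) h.1

theorem bw_sum (x : σ → S) (β : σ → ℕ) (L : List ℕ) (hL : L.Nodup) (j : σ) :
    (L.map (bw x β)).sum j = if β j ∈ L then x j else 0 := by
  induction L with
  | nil => simp
  | cons k L ih =>
    simp only [List.map_cons, List.sum_cons, Pi.add_apply, ih (List.nodup_cons.1 hL).2, bw]
    have := (List.nodup_cons.1 hL).1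
    by_cases h1 : β j = k
    · subst h1; simp [this]
    · simp [h1]

/-- main nonvanishing -/
theorem not_KD (x : σ → S) (β : σ → ℕ) (I : Ideal S) (k : ℕ) (L : List ℕ) (hL : (k :: L).Nodup)
    (hβ : ∀ i, β i ∈ k :: L) (hI : ∀ s : List σ, s.map β = k :: L → (s.map x).prod ∈ I)
    (b : List σ) (hb : b.map β = k :: L)
    (hbI : (b.map x).prod ∉ Ideal.span (Set.range x) * I) : ¬ KD x (L.length + 1) I := by
  intro h
  have hx : x = ((k :: L).map (bw x β)).sum := by
    funext j
    rw [bw_sum x β _ hL, if_pos (hβ j)]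
  have hd : ∀ t, kd x t (kprod (L.map (bw x β))) = kprod ((k :: L).map (bw x β)) t := by
    intro t
    have h0 : kd x t (kprod (L.map (bw x β))) =
        kd ((k :: L).map (bw x β)).sum t (kprod (L.map (bw x β))) :=
      congrArg (fun y => kd y t (kprod (L.map (bw x β)))) hx
    rw [h0, List.map_cons, List.sum_cons, kd_add_left, kd_sum_kprod _ _ (fun _ h => h), add_zero]
    rfl
  obtain ⟨c, hc⟩ := h L.length (by omega) (kprod (L.map (bw x β))) (by
    intro t ht
    rw [hd]
    refine (Ideal.span_le.2 ?_) (kprod_mem x β (k :: L) t (by simpa using ht))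
    rintro f ⟨s, hs, rfl⟩
    exact hI s hs)
  apply hbI
  have hlen : b.length = L.length + 1 := by
    have := congrArg List.length hb
    simpa using this
  have h3 : kd x b (fun s => kprod (L.map (bw x β)) s - kd x s c) ∈ Ideal.span (Set.range x) * I :=
    kd_mem' x I _ (fun j f hf => Ideal.mul_mem_mul (Ideal.subset_span (Set.mem_range_self j)) hf) b _
      (fun s hs => hc s (by omega))
  rw [kd_sub, kd_sq, sub_zero, hd, ← hb, kprod_val x β b (hb ▸ hL)] at h3
  exact h3

end Koszul

section RegSeq
open RingTheory.Sequence
variable {S : Type*} [CommRing S] {σ : Type*}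

noncomputable def quotSMulTopEquiv (I : Ideal S) (g : S) :
    QuotSMulTop g (S ⧸ I) ≃ₗ[S] S ⧸ (I ⊔ Ideal.span {g}) :=
  (Submodule.quotEquivOfEq _ _ (by
    ext y
    obtain ⟨y, rfl⟩ := Submodule.mkQ_surjective I y
    constructor
    · intro h
      obtain ⟨z, -, hz⟩ := h
      obtain ⟨z, rfl⟩ := Submodule.mkQ_surjective I z
      exact ⟨g * z, Ideal.mul_mem_right _ _ (Ideal.mem_span_singleton_self g), by
        rw [← hz]; rfl⟩
    · rintro ⟨z, hz, hz'⟩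
      obtain ⟨a, rfl⟩ := Ideal.mem_span_singleton'.1 hz
      rw [← hz']
      exact ⟨I.mkQ a, trivial, by rw [mul_comm]; rfl⟩)).trans
    (Submodule.quotientQuotientEquivQuotientSup I (Ideal.span {g}))

theorem isSMulRegular_quot_iff (I : Ideal S) (g : S) :
    IsSMulRegular (S ⧸ I) g ↔ ∀ f, g * f ∈ I → f ∈ I := by
  rw [isSMulRegular_iff_right_eq_zero_of_smul]
  constructor
  · intro h f hf
    rw [← Ideal.Quotient.eq_zero_iff_mem]
    apply h
    rw [← Ideal.Quotient.eq_zero_iff_mem] at hf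
    exact hf
  · intro h y hy
    obtain ⟨y, rfl⟩ := Ideal.Quotient.mk_surjective y
    rw [Ideal.Quotient.eq_zero_iff_mem]
    apply h
    rw [← Ideal.Quotient.eq_zero_iff_mem]
    exact hy

theorem KD_of_weaklyRegular [Fintype σ] (x : σ → S) (l : List S) :
    ∀ I : Ideal S, (∀ f ∈ l, f ∈ Ideal.span (Set.range x)) → IsWeaklyRegular (S ⧸ I) l →
      KD x l.length I := by
  induction l with
  | nil => intro I _ _ i hi; simp at hi
  | cons g l ih =>
    intro I hl h
    rw [isWeaklyRegular_cons_iff, (quotSMulTopEquiv I g).isWeaklyRegular_congr,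
      isSMulRegular_quot_iff] at h
    obtain ⟨α, hα⟩ := (Ideal.mem_span_range_iff_exists_fun).1 (hl g (by simp))
    exact KD.reg α hα.symm h.1 (ih _ (fun f hf => hl f (by simp [hf])) h.2)

theorem exists_regular [IsNoetherianRing S] (x : σ → S) (hx : Ideal.span (Set.range x) ≠ ⊤)
    (r : ℕ) : ∀ I : Ideal S, I ≤ Ideal.span (Set.range x) → KD x r I →
      ∃ l : List S, l.length = r ∧ (∀ f ∈ l, f ∈ Ideal.span (Set.range x)) ∧
        IsRegular (S ⧸ I) l := by
  induction r with
  | zero =>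
    intro I hI _
    have : Nontrivial (S ⧸ I) := Ideal.Quotient.nontrivial_iff.2 (fun h => hx (top_le_iff.1 (h ▸ hI)))
    exact ⟨[], rfl, by simp, IsRegular.nil _ _⟩
  | succ r ih =>
    intro I hI h
    have h0 : ∀ f, (∀ j, x j * f ∈ I) → f ∈ I := by
      intro f hf
      obtain ⟨b, hb⟩ := h 0 (by omega) (fun _ => f) (by
        intro t ht
        obtain ⟨j, rfl⟩ := List.length_eq_one_iff.1 ht
        simpa [kd] using hf j)
      simpa [kd] using hb [] rfl
    have h1 : ∃ g ∈ Ideal.span (Set.range x), ∀ f, g * f ∈ I → f ∈ I := by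
      by_contra hcon
      push Not at hcon
      have hsub : (Ideal.span (Set.range x) : Set S) ⊆ ⋃ p ∈ associatedPrimes S (S ⧸ I), p := by
        rw [biUnion_associatedPrimes_eq_zero_divisors]
        intro g hg
        obtain ⟨f, hf, hf'⟩ := hcon g hg
        refine ⟨Ideal.Quotient.mk I f, ?_, ?_⟩
        · rwa [Ne, Ideal.Quotient.eq_zero_iff_mem]
        · rw [← Ideal.Quotient.eq_zero_iff_mem] at hf
          exact hf
      obtain ⟨p, hp, hle⟩ := (Ideal.subset_union_prime_finite (associatedPrimes.finite S (S ⧸ I))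
        (f := id) 0 0 (fun _ h _ _ => h.isPrime)).1 hsub
      rw [AssociatedPrimes.mem_iff, isAssociatedPrime_iff] at hp
      obtain ⟨hpp, y, hy⟩ := hp
      obtain ⟨f, rfl⟩ := Ideal.Quotient.mk_surjective y
      have hf : f ∈ I := by
        apply h0
        intro j
        have : x j ∈ p := hle (Ideal.subset_span (Set.mem_range_self j))
        rw [hy, Submodule.mem_colon_singleton] at this
        rw [← Ideal.Quotient.eq_zero_iff_mem]
        exact this
      apply hpp.ne_top
      rw [hy, Ideal.Quotient.eq_zero_iff_mem.2 hf]
      simp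
    obtain ⟨g, hg, hreg⟩ := h1
    obtain ⟨l, hl, hlm, hlr⟩ := ih (I ⊔ Ideal.span {g})
      (sup_le hI ((Ideal.span_singleton_le_iff_mem _).2 hg))
      (KD.step hreg (fun f hf => I.mul_mem_left _ hf) h (h.mono (by omega)))
    refine ⟨g :: l, by simp [hl], by simpa using ⟨hg, hlm⟩, ?_⟩
    rw [isRegular_cons_iff, (quotSMulTopEquiv I g).isRegular_congr, isSMulRegular_quot_iff]
    exact ⟨hreg, hlr⟩

end RegSeq

section Blocks

theorem exists_blocks {n d : ℕ} (T : Finset (Finset (Fin n))) (hne : T.Nonempty)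
    (hcard : ∀ B ∈ T, B.card = d)
    (hex : ∀ B ∈ T, ∀ B' ∈ T, ∀ k ∈ B, k ∉ B' → ∃ l ∈ B', l ∉ B ∧ insert l (B.erase k) ∈ T)
    (hsupp : ∀ i, ∃ B ∈ T, i ∈ B) :
    ∃ β : Fin n → ℕ, (∀ i, β i ∈ List.range d) ∧
      (∀ s : List (Fin n), s.map β = List.range d → s.Nodup ∧ s.toFinset ∈ T) ∧
      ∃ b : List (Fin n), b.map β = List.range d := by
  classical
  let M : Matroid (Fin n) := Matroid.ofIsBaseOfFinite (E := Set.univ) Set.finite_univ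
    (fun B => B.toFinset ∈ T)
    (by obtain ⟨B, hB⟩ := hne; exact ⟨B, by simpa using hB⟩)
    (by
      intro X Y hX hY a ha
      obtain ⟨l, hl, hl', h⟩ := hex _ hX _ hY a (by simpa using ha.1) (by simpa using ha.2)
      refine ⟨l, ⟨by simpa using hl, by simpa using hl'⟩, ?_⟩
      convert h using 1
      ext i; simp; tauto)
    (fun _ _ => Set.subset_univ _)
  have hM : ∀ B, M.IsBase B ↔ B.toFinset ∈ T := fun B => Iff.rfl
  have hE : M.E = Set.univ := rfl
  obtain ⟨B, hB⟩ := hne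
  have hBb : M.IsBase (B : Set (Fin n)) := by rw [hM]; simpa using hB
  let e : Fin d ≃ B := (Finset.equivFinOfCardEq (hcard B hB)).symm
  let C : ℕ → Set (Fin n) := fun k => M.closure {i | ∃ j : Fin d, (j : ℕ) < k ∧ i = (e j : Fin n)}
  have hCmono : ∀ k k', k ≤ k' → C k ⊆ C k' := by
    intro k k' hk
    apply M.closure_subset_closure
    rintro i ⟨j, hj, rfl⟩
    exact ⟨j, by omega, rfl⟩
  have hC0 : ∀ i, i ∉ C 0 := by
    intro i hi
    obtain ⟨B', hB', hiB'⟩ := hsupp i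
    have hB'b : M.IsBase (B' : Set (Fin n)) := by rw [hM]; simpa using hB'
    have h1 : C 0 = M.closure ∅ := by simp [C]
    rw [h1] at hi
    have h2 : M.Indep {i} := hB'b.indep.subset (by simpa using hiB')
    have h3 := h2.notMem_closure_sdiff_of_mem (Set.mem_singleton i)
    simp only [Set.sdiff_self] at h3
    exact h3 hi
  have hCd : ∀ i, i ∈ C d := by
    intro i
    have h1 : {i | ∃ j : Fin d, (j : ℕ) < d ∧ i = (e j : Fin n)} = (B : Set (Fin n)) := by
      ext i
      constructor
      · rintro ⟨j, _, rfl⟩; exact (e j).2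
      · intro hi; exact ⟨e.symm ⟨i, hi⟩, (e.symm ⟨i, hi⟩).2, by simp⟩
    have : C d = M.closure B := by simp only [C, h1]
    rw [this, hBb.closure_eq]
    trivial
  have hex1 : ∀ i, ∃ k, i ∈ C (k + 1) := fun i => ⟨d, hCmono d (d+1) (by omega) (hCd i)⟩
  let β : Fin n → ℕ := fun i => Nat.find (hex1 i)
  have hβ1 : ∀ i, i ∈ C (β i + 1) := fun i => Nat.find_spec (hex1 i)
  have hβ2 : ∀ i, i ∉ C (β i) := by
    intro i hi
    rcases hk : β i with _ | k
    · rw [hk] at hi; exact hC0 i hi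
    · rw [hk] at hi
      have := Nat.find_min' (hex1 i) hi
      change β i ≤ k at this
      omega
  have hβ3 : ∀ i, β i < d := by
    intro i
    by_contra h
    exact hβ2 i (hCmono d _ (by omega) (hCd i))
  have hβe : ∀ k : Fin d, β (e k) = k := by
    intro k
    apply le_antisymm
    · apply Nat.find_min' (hex1 _)
      exact M.mem_closure_of_mem' ⟨k, by omega, rfl⟩ (Set.mem_univ _)
    · by_contra hlt
      push Not at hlt
      have h1 := hCmono _ _ (show β (e k) + 1 ≤ k by omega) (hβ1 (e k))
      refine hBb.indep.notMem_closure_sdiff_of_mem (e k).2 (M.closure_subset_closure ?_ h1)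
      rintro i ⟨j, hj, rfl⟩
      refine ⟨(e j).2, ?_⟩
      intro h
      have : j = k := e.injective (Subtype.ext h)
      omega
  have main : ∀ m, ∀ s : List (Fin n), s.map β = List.range m →
      s.Nodup ∧ M.Indep (s.toFinset : Set (Fin n)) := by
    intro m
    induction m with
    | zero => intro s hs; simp at hs; subst hs; simp
    | succ m ih =>
      intro s hs
      rw [List.range_succ] at hs
      obtain ⟨s', t, rfl, hs', ht⟩ := List.map_eq_append_iff.1 hs
      obtain ⟨a, rfl, ha⟩ : ∃ a, t = [a] ∧ β a = m := by
        obtain ⟨a, t', rfl, h1, h2⟩ := List.map_eq_cons_iff.1 ht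
        simp at h2
        exact ⟨a, by simp [h2], h1⟩
      obtain ⟨h1, h2⟩ := ih s' hs'
      have h3 : a ∉ M.closure (s'.toFinset : Set (Fin n)) := by
        intro h
        have h4 : M.closure (s'.toFinset : Set (Fin n)) ⊆ C m := by
          apply M.closure_subset_closure_of_subset_closure
          intro i hi
          have hi' : i ∈ s' := by simpa using hi
          have h5 : β i ∈ List.range m := hs' ▸ List.mem_map_of_mem hi'
          rw [List.mem_range] at h5
          exact hCmono _ _ h5 (hβ1 i)
        have := h4 h
        rw [← ha] at this
        exact hβ2 a this
      rw [h2.notMem_closure_iff (Set.mem_univ _)] at h3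
      refine ⟨?_, ?_⟩
      · rw [List.nodup_append]
        refine ⟨h1, by simp, ?_⟩
        intro i hi j hj hij
        simp at hj
        subst hj; subst hij
        exact h3.2 (by simpa using hi)
      · convert h3.1 using 1
        ext i; simp
  refine ⟨β, fun i => by simpa using hβ3 i, ?_, (List.finRange d).map (fun k => (e k : Fin n)), ?_⟩
  · intro s hs
    obtain ⟨h1, h2⟩ := main d s hs
    refine ⟨h1, ?_⟩
    obtain ⟨B', hB', hsub⟩ := h2.exists_isBase_superset
    rw [hM] at hB'
    have hlen : s.length = d := by simpa using congrArg List.length hs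
    have : s.toFinset = B'.toFinset := by
      apply Finset.eq_of_subset_of_card_le
      · intro i hi; simpa using hsub hi
      · rw [hcard _ hB', List.toFinset_card_of_nodup h1, hlen]
    rw [this]; exact hB'
  · rw [List.map_map]
    have : (β ∘ fun k => (e k : Fin n)) = Fin.val := by funext k; exact hβe k
    rw [this, List.map_coe_finRange_eq_range]

end Blocks

section Mon
open MvPolynomial
variable {K : Type*} [Field K] {n : ℕ}

noncomputable def ind (B : Finset (Fin n)) : Fin n →₀ ℕ := ∑ i ∈ B, Finsupp.single i 1

theorem ind_apply (B : Finset (Fin n)) (i : Fin n) : ind B i = if i ∈ B then 1 else 0 := by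
  simp [ind, Finsupp.finsetSum_apply, Finsupp.single_apply]

theorem ind_degree (B : Finset (Fin n)) : (ind B).degree = B.card := by
  simp [ind]

theorem monomial_ind (B : Finset (Fin n)) :
    (monomial (ind B) (1 : K)) = ∏ i ∈ B, X i := by
  rw [ind, monomial_sum_one]
  rfl

noncomputable def mI (K : Type*) [Field K] (s : Set (Finset (Fin n))) :
    Ideal (MvPolynomial (Fin n) K) :=
  Ideal.span ((fun e => monomial e (1 : K)) '' (ind '' s))

theorem mem_mI (s : Set (Finset (Fin n))) (f : MvPolynomial (Fin n) K) :
    f ∈ mI K s ↔ ∀ m ∈ f.support, ∃ B ∈ s, ind B ≤ m := by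
  rw [mI, mem_ideal_span_monomial_image]
  simp

theorem KD_vars (k : ℕ) : ∀ A : Finset (Fin n), n - A.card = k →
    KD (X : Fin n → MvPolynomial (Fin n) K) k (Ideal.span (X '' (A : Set (Fin n)))) := by
  induction k with
  | zero => intro A _ i hi; omega
  | succ k ih =>
    intro A hA
    obtain ⟨j, hj⟩ : ∃ j, j ∉ A := by
      by_contra h
      push Not at h
      have : A = Finset.univ := Finset.eq_univ_iff_forall.2 h
      rw [this] at hA
      simp at hA
    have h1 := ih (insert j A) (by rw [Finset.card_insert_of_notMem hj]; omega)
    refine KD.reg (g := X j) (fun i => if i = j then 1 else 0) (by simp) ?_ ?_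
    · intro f hf
      rw [mem_ideal_span_X_image] at hf ⊢
      intro m hm
      obtain ⟨i, hi, hi'⟩ := hf (Finsupp.single j 1 + m) (by
        rw [mem_support_iff, coeff_X_mul]; exact mem_support_iff.1 hm)
      refine ⟨i, hi, ?_⟩
      have : j ≠ i := by rintro rfl; exact hj hi
      simpa [Finsupp.single_apply, this] using hi'
    · convert h1 using 1
      rw [Finset.coe_insert, Set.image_insert_eq, Set.insert_eq, Ideal.span_union, sup_comm]

theorem KD_matroid {r : ℕ} (T : Finset (Finset (Fin n)))
    (hne : T.Nonempty)
    (hcard : ∀ B ∈ T, B.card = r + 1)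
    (hex : ∀ B ∈ T, ∀ B' ∈ T, ∀ k ∈ B, k ∉ B' → ∃ l ∈ B', l ∉ B ∧ insert l (B.erase k) ∈ T) :
    KD (X : Fin n → MvPolynomial (Fin n) K) r (mI K (T : Set (Finset (Fin n)))) := by
  classical
  suffices H : ∀ s : Finset (Finset (Fin n)), s ⊆ T →
      (∀ B ∈ s, ∀ B' ∈ T, toColex B' < toColex B → B' ∈ s) →
      KD (X : Fin n → MvPolynomial (Fin n) K) r (mI K (s : Set (Finset (Fin n)))) from
    H T subset_rfl (fun _ _ B' h _ => h)
  intro s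
  refine Finset.induction_on_max_value (fun B : Finset (Fin n) => toColex B) s ?_ ?_
  · intro _ _
    have h1 := KD_vars (K := K) n (∅ : Finset (Fin n)) (by simp)
    obtain ⟨B, hB⟩ := hne
    have h2 : r ≤ n := by
      have := hcard B hB
      have h3 := Finset.card_le_univ B
      simp at h3
      omega
    have := h1.mono h2
    simpa [mI] using this
  · intro a s has hmax ih hsub hcl
    have hsT : s ⊆ T := fun B hB => hsub (Finset.mem_insert_of_mem hB)
    have haT : a ∈ T := hsub (Finset.mem_insert_self _ _)
    have hJ := ih hsT (by
      intro B hB B' hB' hlt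
      have := hcl B (Finset.mem_insert_of_mem hB) B' hB' hlt
      rcases Finset.mem_insert.1 this with rfl | h
      · exact absurd (hmax B hB) (not_le.2 hlt)
      · exact h)
    have heq : mI K ((insert a s : Finset _) : Set (Finset (Fin n))) =
        mI K (s : Set (Finset (Fin n))) ⊔ Ideal.span {monomial (ind a) (1 : K)} := by
      rw [mI, Finset.coe_insert, Set.image_insert_eq, Set.image_insert_eq, Set.insert_eq,
        Ideal.span_union, sup_comm]
      rfl
    rw [heq]
    let A : Finset (Fin n) := Finset.univ.filter
      (fun l => l ∉ a ∧ ∃ k ∈ a, insert l (a.erase k) ∈ s)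
    refine KD.step (P := Ideal.span (X '' (A : Set (Fin n)))) ?_ ?_ ?_ hJ
    · intro f hf
      rw [mem_mI] at hf
      rw [mem_ideal_span_X_image]
      intro m hm
      obtain ⟨B, hB, hle⟩ := hf (ind a + m) (by
        rw [mem_support_iff, coeff_monomial_mul, one_mul]; exact mem_support_iff.1 hm)
      have hB : B ∈ s := hB
      have hBa : B ≠ a := by rintro rfl; exact has hB
      have hlt : toColex B < toColex a := lt_of_le_of_ne (hmax B hB) (by simpa using hBa)
      have hdiff : (a \ B).Nonempty := by
        rw [Finset.sdiff_nonempty]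
        intro h
        exact hBa (Finset.eq_of_subset_of_card_le h
          (by rw [hcard _ haT, hcard _ (hsT hB)])).symm
      obtain ⟨k, hk, hkmax⟩ := Finset.exists_max_image (a \ B) id hdiff
      rw [Finset.mem_sdiff] at hk
      obtain ⟨l, hl, hla, hw⟩ := hex a haT B (hsT hB) k hk.1 hk.2
      have hwlt : toColex (insert l (a.erase k)) < toColex a := by
        rw [Finset.Colex.toColex_lt_toColex]
        have hkl : k ≠ l := by rintro rfl; exact hla hk.1
        constructor
        · intro h
          apply hla
          rw [← h]
          simp
        · intro x hx hxa
          have hxl : x = l := by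
            rcases Finset.mem_insert.1 hx with h | h
            · exact h
            · exact absurd (Finset.mem_of_mem_erase h) hxa
          subst hxl
          obtain ⟨b, hb, hbB, hxb⟩ := (Finset.Colex.toColex_lt_toColex.1 hlt).2 hl hla
          refine ⟨k, hk.1, by simp [hkl], hxb.trans (hkmax b (by simp [hb, hbB]))⟩
      have hws : insert l (a.erase k) ∈ s := by
        have := hcl a (Finset.mem_insert_self _ _) _ hw hwlt
        rcases Finset.mem_insert.1 this with h | h
        · rw [h] at hwlt; exact absurd hwlt (lt_irrefl _)
        · exact h
      refine ⟨l, by simpa [A] using ⟨hla, k, hk.1, hws⟩, ?_⟩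
      have := hle l
      simp only [Finsupp.add_apply, ind_apply, hl, hla, if_true, if_false] at this
      omega
    · intro f hf
      have hle : Ideal.span (X '' (A : Set (Fin n))) ≤
          (mI K (s : Set (Finset (Fin n)))).colon {monomial (ind a) (1 : K)} := by
        rw [Ideal.span_le]
        rintro _ ⟨l, hl, rfl⟩
        obtain ⟨hla, k, hk, hs⟩ : l ∉ a ∧ ∃ k ∈ a, insert l (a.erase k) ∈ s := by
          simpa [A] using hl
        rw [SetLike.mem_coe, Submodule.mem_colon_singleton, smul_eq_mul, mem_mI]
        intro m hm
        refine ⟨_, hs, ?_⟩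
        have hm' : m = Finsupp.single l 1 + ind a := by
          rw [X, monomial_mul] at hm
          have := support_monomial_subset hm
          simpa using this
        rw [hm']
        intro i
        simp only [Finsupp.add_apply, ind_apply, Finsupp.single_apply, Finset.mem_insert,
          Finset.mem_erase]
        split_ifs <;> first | omega | tauto
      have := hle hf
      rw [Submodule.mem_colon_singleton, smul_eq_mul, mul_comm] at this
      exact this
    · refine (KD_vars (K := K) _ A rfl).mono ?_
      have hdisj : Disjoint A a := by
        rw [Finset.disjoint_left]
        intro i hi
        exact (Finset.mem_filter.1 hi).2.1
      have h1 := Finset.card_le_univ (A ∪ a)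
      rw [Finset.card_union_of_disjoint hdisj, hcard a haT, Fintype.card_fin] at h1
      omega

theorem not_KD_matroid {r : ℕ} (T : Finset (Finset (Fin n))) (hne : T.Nonempty)
    (hcard : ∀ B ∈ T, B.card = r + 1)
    (hex : ∀ B ∈ T, ∀ B' ∈ T, ∀ k ∈ B, k ∉ B' → ∃ l ∈ B', l ∉ B ∧ insert l (B.erase k) ∈ T)
    (hsupp : ∀ i, ∃ B ∈ T, i ∈ B) :
    ¬ KD (X : Fin n → MvPolynomial (Fin n) K) (r + 1) (mI K (T : Set (Finset (Fin n)))) := by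
  classical
  obtain ⟨β, h1, h2, b, hb⟩ := exists_blocks T hne hcard hex hsupp
  have hr : List.range (r + 1) = 0 :: (List.range r).map Nat.succ := List.range_succ_eq_map
  have hprod : ∀ s : List (Fin n), s.Nodup →
      (s.map (X : Fin n → MvPolynomial (Fin n) K)).prod = monomial (ind s.toFinset) 1 := by
    intro s hs
    rw [monomial_ind, List.prod_toFinset _ hs]
  have hd : (mI K (T : Set (Finset (Fin n)))) ≤ idealOfVars (Fin n) K ^ (r + 1) := by
    rw [mI, Ideal.span_le]
    rintro _ ⟨_, ⟨B, hB, rfl⟩, rfl⟩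
    rw [SetLike.mem_coe, monomial_mem_pow_idealOfVars_iff _ _ one_ne_zero, ind_degree, hcard B hB]
  have := not_KD (X : Fin n → MvPolynomial (Fin n) K) β (mI K (T : Set (Finset (Fin n)))) 0
    ((List.range r).map Nat.succ) (by rw [← hr]; exact List.nodup_range)
    (by rw [← hr]; exact h1) (by
      intro s hs
      rw [← hr] at hs
      obtain ⟨h3, h4⟩ := h2 s hs
      rw [hprod s h3]
      exact Ideal.subset_span ⟨_, ⟨_, h4, rfl⟩, rfl⟩) b (by rw [← hr]; exact hb) (by
      intro h
      obtain ⟨h3, h4⟩ := h2 b hb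
      rw [hprod b h3] at h
      have h5 := Ideal.mul_mono_right hd h
      have h6 : Ideal.span (Set.range (X : Fin n → MvPolynomial (Fin n) K)) *
          idealOfVars (Fin n) K ^ (r + 1) = idealOfVars (Fin n) K ^ (r + 2) := by
        rw [show r + 2 = (r + 1) + 1 from rfl, pow_succ' _ (r + 1)]
      rw [h6, monomial_mem_pow_idealOfVars_iff _ _ one_ne_zero, ind_degree, hcard _ h4] at h5
      omega)
  simpa using this

end Mon

section Translate
open MvPolynomial
variable {K : Type*} [Field K] {n : ℕ}

theorem minGens_ind {I : Ideal (MvPolynomial (Fin n) K)} {u : MvPolynomial (Fin n) K}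
    (hu : u ∈ minGens K I) (hsq : Squarefree u) : ∃ B : Finset (Fin n), u = monomial (ind B) 1 := by
  obtain ⟨e, rfl⟩ := hu.1
  refine ⟨e.support, ?_⟩
  suffices h : e = ind e.support from congrArg (fun e => monomial e (1 : K)) h
  ext i
  rw [ind_apply]
  by_contra hne
  have h2 : 2 ≤ e i := by
    by_contra h
    apply hne
    split_ifs with h'
    · have := Finsupp.mem_support_iff.1 h'; omega
    · simpa using h'
  have hdvd : (X i * X i : MvPolynomial (Fin n) K) ∣ monomial e 1 := by
    have h3 : Finsupp.single i 2 ≤ e := by simpa using h2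
    rw [X, monomial_mul, monomial_dvd_monomial]
    refine ⟨Or.inr ?_, by simp⟩
    rw [← Finsupp.single_add]
    exact h3
  have := hsq _ hdvd
  exact (X_prime (R := K) (i := i)).not_unit this

theorem eq_span_minGens {I : Ideal (MvPolynomial (Fin n) K)} (h : IsMonomialIdeal K I) :
    I = Ideal.span (minGens K I) := by
  apply le_antisymm
  · obtain ⟨A, hA, hI⟩ := h
    have key : ∀ u ∈ A, u ∈ Ideal.span (minGens K I) := by
      intro u hu
      obtain ⟨e, rfl⟩ := hA u hu
      have huI : monomial e (1 : K) ∈ I := hI ▸ Ideal.subset_span hu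
      obtain ⟨m, hme, hm⟩ := exists_minimal_le_of_wellFoundedLT
        (fun e : Fin n →₀ ℕ => monomial e (1 : K) ∈ I) e huI
      have hmg : monomial m (1 : K) ∈ minGens K I := by
        refine ⟨⟨m, rfl⟩, hm.1, ?_⟩
        rintro _ ⟨v, rfl⟩ hv hdvd
        rw [monomial_dvd_monomial] at hdvd
        have hle : v ≤ m := by simpa using hdvd
        rw [le_antisymm hle (hm.2 hv hle)]
      refine Ideal.mem_of_dvd _ ?_ (Ideal.subset_span hmg)
      rw [monomial_dvd_monomial]
      exact ⟨Or.inr hme, by simp⟩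
    conv_lhs => rw [hI]
    rw [Ideal.span_le]
    exact key
  · rw [Ideal.span_le]
    exact fun u hu => hu.2.1

end Translate

/-- Let `I ⊂ S = K[x_1,…,x_n]` be a matroidal ideal generated in
degree `d` with `supp(I) = [n]`. Then `depth(S/I) = d − 1`. -/
theorem depth_of_matroidal {K : Type*} [Field K] {n : ℕ}
    (I : Ideal (MvPolynomial (Fin n) K)) (d : ℕ)
    (hmat : IsMatroidal K I)
    (hne : (minGens K I).Nonempty)
    (hdeg : ∀ u ∈ minGens K I, totalDegree u = d)
    (hsupp : ∀ i : Fin n, ∃ u ∈ minGens K I, X i ∣ u) :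
    qdepth K I = d - 1 := by
  classical
  obtain ⟨⟨hmon, -, hexch⟩, hsq⟩ := hmat
  let T : Finset (Finset (Fin n)) := Finset.univ.filter
    (fun B => monomial (ind B) (1 : K) ∈ minGens K I)
  have hT : ∀ B, B ∈ T ↔ monomial (ind B) (1 : K) ∈ minGens K I := by intro B; simp [T]
  have hG : ∀ u ∈ minGens K I, ∃ B ∈ T, u = monomial (ind B) 1 := by
    intro u hu
    obtain ⟨B, rfl⟩ := minGens_ind hu (hsq u hu)
    exact ⟨B, (hT B).2 hu, rfl⟩
  have hTne : T.Nonempty := by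
    obtain ⟨u, hu⟩ := hne
    obtain ⟨B, hB, _⟩ := hG u hu
    exact ⟨B, hB⟩
  have hcard : ∀ B ∈ T, B.card = d := by
    intro B hB
    have := hdeg _ ((hT B).1 hB)
    rw [totalDegree_monomial _ one_ne_zero] at this
    rw [← this, ← ind_degree]
    rfl
  have hIT : I = mI K (T : Set (Finset (Fin n))) := by
    apply le_antisymm
    · conv_lhs => rw [eq_span_minGens hmon]
      rw [Ideal.span_le]
      intro u hu
      obtain ⟨B, hB, rfl⟩ := hG u hu
      exact Ideal.subset_span ⟨_, ⟨B, hB, rfl⟩, rfl⟩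
    · rw [mI, Ideal.span_le]
      rintro _ ⟨_, ⟨B, hB, rfl⟩, rfl⟩
      exact ((hT B).1 hB).2.1
  have hTs : ∀ i, ∃ B ∈ T, i ∈ B := by
    intro i
    obtain ⟨u, hu, hdvd⟩ := hsupp i
    obtain ⟨B, hB, rfl⟩ := hG u hu
    refine ⟨B, hB, ?_⟩
    rw [X_dvd_monomial, ind_apply] at hdvd
    by_contra h
    simp [h] at hdvd
  have hex : ∀ B ∈ T, ∀ B' ∈ T, ∀ k ∈ B, k ∉ B' →
      ∃ l ∈ B', l ∉ B ∧ insert l (B.erase k) ∈ T := by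
    intro B hB B' hB' k hk hk'
    obtain ⟨l, hl, w, hw, hlw⟩ := hexch _ ((hT B).1 hB) _ ((hT B').1 hB') k (by
      rw [degreeOf_monomial_eq _ _ one_ne_zero, degreeOf_monomial_eq _ _ one_ne_zero,
        ind_apply, ind_apply, if_pos hk, if_neg hk']
      omega)
    rw [degreeOf_monomial_eq _ _ one_ne_zero, degreeOf_monomial_eq _ _ one_ne_zero,
        ind_apply, ind_apply] at hl
    have hlB' : l ∈ B' := by by_contra h; simp [h] at hl
    have hlB : l ∉ B := by intro h; simp [h, hlB'] at hl
    refine ⟨l, hlB', hlB, ?_⟩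
    obtain ⟨B'', hB'', heq⟩ := hG _ hlw
    have h1 : (X k * monomial (ind B'') 1 : MvPolynomial (Fin n) K) =
        X l * monomial (ind B) 1 := by
      rw [← heq, hw]; ring
    rw [X, X, monomial_mul, monomial_mul, mul_one] at h1
    have h2 := monomial_left_injective (one_ne_zero (α := K)) h1
    have hB2 : insert l (B.erase k) = B'' := by
      have hkl : k ≠ l := by rintro rfl; exact hlB hk
      ext i
      have h3 := DFunLike.congr_fun h2 i
      simp only [Finsupp.add_apply, Finsupp.single_apply, ind_apply] at h3
      simp only [Finset.mem_insert, Finset.mem_erase]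
      by_cases e1 : k = i
      · subst e1
        simp [hkl.symm, hk] at h3
        simp [h3, hkl]
      · by_cases e2 : l = i
        · subst e2
          simp [e1, hlB] at h3
          simp [h3]
        · simp only [e1, e2, if_false, zero_add] at h3
          have e1' : i ≠ k := fun h => e1 h.symm
          have e2' : i ≠ l := fun h => e2 h.symm
          simp only [e1', e2', ne_eq, not_false_eq_true, true_and, false_or]
          by_cases e3 : i ∈ B <;> by_cases e4 : i ∈ B'' <;> simp [e3, e4] at h3 ⊢
    rw [hB2]; exact hB''
  rcases d with _ | r
  · have htop : I = ⊤ := by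
      obtain ⟨B, hB⟩ := hTne
      have h0 : B = ∅ := Finset.card_eq_zero.1 (hcard B hB)
      have := ((hT B).1 hB).2.1
      rw [h0] at this
      rw [Ideal.eq_top_iff_one]
      simpa [ind] using this
    have hempty : {m | ∃ l : List (MvPolynomial (Fin n) K), l.length = m ∧
        (∀ f ∈ l, f ∈ Ideal.span (Set.range (X : Fin n → MvPolynomial (Fin n) K))) ∧
        RingTheory.Sequence.IsRegular (MvPolynomial (Fin n) K ⧸ I) l} = ∅ := by
      rw [Set.eq_empty_iff_forall_notMem]
      rintro m ⟨l, -, -, hreg⟩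
      have hsub : Subsingleton (MvPolynomial (Fin n) K ⧸ I) :=
        Ideal.Quotient.subsingleton_iff.2 htop
      exact hreg.top_ne_smul (Subsingleton.elim _ _)
    rw [qdepth, hempty]
    simp
  · have hle : I ≤ idealOfVars (Fin n) K := by
      rw [hIT, mI, Ideal.span_le]
      rintro _ ⟨_, ⟨B, hB, rfl⟩, rfl⟩
      have := (monomial_mem_pow_idealOfVars_iff (R := K) 1 (ind B) one_ne_zero).2
        (by rw [ind_degree, hcard B hB]; omega)
      rwa [pow_one] at this
    have hm : idealOfVars (Fin n) K ≠ ⊤ := by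
      rw [Ne, Ideal.eq_top_iff_one]
      intro h
      rw [← pow_one (idealOfVars (Fin n) K)] at h
      have := (monomial_mem_pow_idealOfVars_iff (R := K) (σ := Fin n) 1 0 one_ne_zero).1 h
      simp at this
    have hup : ¬ KD (X : Fin n → MvPolynomial (Fin n) K) (r + 1) I := by
      rw [hIT]; exact not_KD_matroid T hTne hcard hex hTs
    have hlow : KD (X : Fin n → MvPolynomial (Fin n) K) r I := by
      rw [hIT]; exact KD_matroid T hTne hcard hex
    have hgr : IsGreatest {m | ∃ l : List (MvPolynomial (Fin n) K), l.length = m ∧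
        (∀ f ∈ l, f ∈ Ideal.span (Set.range (X : Fin n → MvPolynomial (Fin n) K))) ∧
        RingTheory.Sequence.IsRegular (MvPolynomial (Fin n) K ⧸ I) l} r := by
      constructor
      · exact exists_regular X hm r I hle hlow
      · rintro m ⟨l, rfl, hl, hreg⟩
        by_contra hlt
        exact hup ((KD_of_weaklyRegular X l I hl hreg.toIsWeaklyRegular).mono (by omega))
    rw [qdepth, hgr.csSup_eq]
    simp
end

section
/- The squarefree part of a polymatroidal ideal is a matroidal ideal. That is, if I ⊂ S = K[x_1,…,x_n] is a polymatroidal ideal and I' is the ideal generated by the squarefree monomials among the minimal generators of I, then I' is a matroidal ideal. -/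
open MvPolynomial

theorem minGens_sqfPart_aux {K : Type*} [Field K] {n : ℕ}
    (I : Ideal (MvPolynomial (Fin n) K)) (u : MvPolynomial (Fin n) K) :
    u ∈ minGens K (sqfPart K I) ↔ u ∈ minGens K I ∧ Squarefree u := by
  have hle : sqfPart K I ≤ I := by
    rw [sqfPart, Ideal.span_le]
    rintro x ⟨hx, -⟩
    exact hx.2.1
  constructor
  · rintro ⟨⟨d, rfl⟩, hu, hmin⟩
    have hset : {u | u ∈ minGens K I ∧ Squarefree u} =
        (fun s => monomial s (1 : K)) '' {s : Fin n →₀ ℕ | monomial s (1 : K) ∈ minGens K I ∧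
          Squarefree (monomial s (1 : K))} := by
      ext x
      constructor
      · rintro ⟨hx, hs⟩
        obtain ⟨e, rfl⟩ := hx.1
        exact ⟨e, ⟨hx, hs⟩, rfl⟩
      · rintro ⟨e, he, rfl⟩
        exact he
    have hu' := hu
    rw [sqfPart, hset, mem_ideal_span_monomial_image] at hu'
    obtain ⟨e, he, hed⟩ := hu' d (by classical simp [coeff_monomial])
    have := hmin (monomial e 1) ⟨e, rfl⟩ (Ideal.subset_span he)
      (by rw [monomial_dvd_monomial]; exact ⟨Or.inr hed, dvd_rfl⟩)
    rw [← this]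
    exact he
  · rintro ⟨hu, hs⟩
    exact ⟨hu.1, Ideal.subset_span ⟨hu, hs⟩, fun v hv hvI hd => hu.2.2 v hv (hle hvI) hd⟩

/-- The squarefree part of a polymatroidal ideal is a matroidal
ideal. -/
theorem sqfPart_isMatroidal {K : Type*} [Field K] {n : ℕ}
    (I : Ideal (MvPolynomial (Fin n) K)) (h : IsPolymatroidal K I) :
    IsMatroidal K (sqfPart K I) := by
  obtain ⟨-, ⟨d, hd⟩, hex⟩ := h
  refine ⟨⟨⟨_, fun u hu => hu.1.1, rfl⟩, ⟨d, fun u hu => hd u ?_⟩, ?_⟩, fun u hu => ?_⟩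
  · exact ((minGens_sqfPart_aux I u).1 hu).1
  · intro u hu v hv k hk
    rw [minGens_sqfPart_aux] at hu hv
    obtain ⟨l, hl, w, rfl, hw⟩ := hex u hu.1 v hv.1 k hk
    refine ⟨l, hl, w, rfl, ?_⟩
    rw [minGens_sqfPart_aux]
    refine ⟨hw, ?_⟩
    have hv1 : degreeOf l v ≤ 1 := by
      obtain ⟨⟨⟨e, rfl⟩, -⟩, hsq⟩ := hv
      rw [degreeOf_monomial_eq _ _ one_ne_zero]
      by_contra hcon
      have hdv : (X l * X l : MvPolynomial (Fin n) K) ∣ monomial e 1 := by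
        rw [X, monomial_mul, monomial_dvd_monomial]
        refine ⟨Or.inr ?_, by simp⟩
        intro i
        by_cases hi : l = i
        · subst hi
          simp
          omega
        · simp [hi]
      exact (X_prime (R := K) (i := l)).not_unit (hsq _ hdv)
    have hnd : ¬ (X l : MvPolynomial (Fin n) K) ∣ w := by
      intro hdvd
      obtain ⟨⟨⟨e, he⟩, -⟩, -⟩ := hu
      have h1 : (X l : MvPolynomial (Fin n) K) ∣ X k * w := hdvd.mul_left _
      rw [he] at h1 hl
      rw [degreeOf_monomial_eq _ _ one_ne_zero] at hl
      rw [X_dvd_monomial] at h1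
      rcases h1 with h1 | h1
      · exact one_ne_zero h1
      · omega
    have hX := (X_prime (R := K) (i := l)).irreducible
    exact (squarefree_mul_iff).2 ⟨(hX.isRelPrime_iff_not_dvd).2 hnd, hX.squarefree,
      hu.2.squarefree_of_dvd (dvd_mul_left _ _)⟩
  · exact ((minGens_sqfPart_aux I u).1 hu).2
end
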